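/- Assume constants 0 < c_ℙ < min(1, C_ℙ) with c_ℙ·m/log m ≤ |ℙ_m| ≤ C_ℙ·m/log m for all m ≥ 2, where ℙ_m is the set of primes in (⌈m/2⌉, m]. Then for every d ≥ 1 and ε ∈ (0,1), there exists a QMC rule Q using n = ∑_{p ∈ ℙ_m} p² points with m = ⌈16 c_ℙ^{−1} ε^{−1}⌉ (provided min_{p∈ℙ_m} p ≥ d) whose worst-case error over the unit ball of F_d² is at most ε; consequently the information complexity satisfies n(ε, d, F_d²) ≤ C₂·ε^{−3}/log(ε^{−1}) for a constant C₂ independent of d and ε. -/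

import Mathlib

open Finset

noncomputable section

/-- The support of a frequency vector. -/
def supp {d : ℕ} (k : Fin d → ℤ) : Finset (Fin d) :=
  Finset.univ.filter (fun j => k j ≠ 0)

/-- `width(supp k) = max supp(k) - min supp(k) + 1`, with value 1 for empty support. -/
def width {d : ℕ} (k : Fin d → ℤ) : ℕ :=
  if h : (supp k).Nonempty then ((supp k).max' h).val - ((supp k).min' h).val + 1 else 1

/-- `min_{j ∈ supp(k)} log |k_j|`, with value 0 for empty support. -/
noncomputable def logmin {d : ℕ} (k : Fin d → ℤ) : ℝ :=
  if h : (supp k).Nonempty then (supp k).inf' h (fun j => Real.log |(k j : ℝ)|) else 0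

/-- `exp(2πiz)`. -/
noncomputable def e2pi (z : ℂ) : ℂ := Complex.exp (2 * Real.pi * Complex.I * z)

/-- The set `ℙ_m` of primes `p` with `⌈m/2⌉ < p ≤ m`. -/
def Pset (m : ℕ) : Finset ℕ :=
  (Finset.range (m + 1)).filter (fun p => p.Prime ∧ (m + 1) / 2 < p)

/-- The `h`-th point of Korobov's `p`-set `S_{d,p}`:
`x_h^{(p)} = ({h/p²}, {h²/p²}, …, {h^d/p²})`. -/
noncomputable def korobovPt (d p h : ℕ) : Fin d → ℝ :=
  fun j => Int.fract ((h : ℝ) ^ (j.val + 1) / (p : ℝ) ^ 2)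

/-- The weight `max(width(supp k), min_{j ∈ supp k} log |k_j|)` defining the norm of `F_d²`. -/
noncomputable def weight2 {d : ℕ} (k : Fin d → ℤ) : ℝ := max (width k : ℝ) (logmin k)

/-!
The error of an equal-weight rule on a Fourier series is controlled by the normalised exponential
sums of its nodes. For Korobov's `p`-set these are complete sums modulo `p²` of the polynomial
`P = ∑ⱼ kⱼ Xʲ⁺¹`. Writing the argument as a Teichmüller lift plus a multiple of `p` and summing
over the latter leaves `p` times a sum over the zeros of `P'` modulo `p`. There are three cases.

* If `P'` does not vanish modulo `p`, it has at most `width k` zeros, since a power of `X` can be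
  divided out; the sum is at most `p · width k`.
* If `p` divides every `kⱼ`, only the trivial bound `p²` is available, but the product of these
  primes divides every nonzero `kⱼ`, so they number at most `min log|kⱼ| / log (m / 2)`.
* The remaining case occurs only for `p = d`, with `P ≡ c Xᵖ` modulo `p`, and asks for a saving of
  `log p / width k` in a sum of Heilbronn type `∑ₜ e(c tᵖ / p²) e(H(t) / p)`, since the number of
  primes in `ℙ_m` is only of order `m / log m`. The pure Heilbronn sum is treated by Stepanov's
  method, applied to the level sets of the truncated logarithm; when `H` is nonconstant, averaging
  over the multiplicative shifts `t ↦ ut` turns the sum into a bilinear form over a curve, whose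
  additive energy is bounded by counting the nondegenerate solutions of a system of power sums with
  Bézout's theorem.
-/

section Polynomial

open Polynomial

section General

variable {R : Type*} [CommRing R]

lemma eq_zero_of_C_mul_add_derivative_eq_zero [NoZeroDivisors R] {c : R} (hc : c ≠ 0) {g : R[X]}
    (h : C c * g + derivative g = 0) : g = 0 := by
  by_contra hg
  have hlt := degree_derivative_lt hg
  rw [← neg_eq_of_add_eq_zero_right h, degree_neg, degree_C_mul hc] at hlt
  exact hlt.false

lemma natDegree_eq_zero_of_derivative_eq_zero_of_natDegree_lt [NoZeroDivisors R] {p : ℕ} [CharP R p]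
    {g : R[X]} (hg : g.natDegree < p) (h : derivative g = 0) : g.natDegree = 0 := by
  have hexpand := expand_contract p h (by omega)
  rw [← hexpand, natDegree_expand] at hg ⊢
  rw [Nat.lt_one_iff.mp (Nat.lt_of_mul_lt_mul_right (hg.trans_eq (one_mul p).symm)), zero_mul]

lemma derivative_mem_degreeLT {n : ℕ} {g : R[X]} (hg : g ∈ degreeLT R n) :
    derivative g ∈ degreeLT R (n - 1) := by
  rw [mem_degreeLT, degree_lt_iff_coeff_zero] at *
  intro m hm
  rw [coeff_derivative, hg (m + 1) (by omega), zero_mul]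

lemma X_sub_C_pow_dvd_of_iterate_mul_derivative [NoZeroDivisors R] {v : R[X]} {x : R}
    (hv : v.eval x ≠ 0) {D : ℕ} (hD : ∀ n, 0 < n → n < D → (n : R) ≠ 0) {f : R[X]}
    (hf : ∀ n < D, ((fun g => v * derivative g)^[n] f).eval x = 0) : (X - C x) ^ D ∣ f := by
  have : IsDomain R := @NoZeroDivisors.to_isDomain R _ ⟨⟨_, _, hv⟩⟩ _
  induction D generalizing f with
  | zero => simp
  | succ D ih =>
    have hD' : ∀ n, 0 < n → n < D → (n : R) ≠ 0 := fun n h0 hn => hD n h0 (by omega)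
    obtain ⟨h, rfl⟩ := ih hD' fun n hn => hf n (by omega)
    have hstep : (X - C x) ^ D ∣ v * derivative ((X - C x) ^ D * h) :=
      ih hD' fun n hn => by simpa using hf (n + 1) (by omega)
    rw [pow_succ]
    refine mul_dvd_mul_left _ (dvd_iff_isRoot.mpr ?_)
    rcases D with _ | D
    · simpa using hf 0 one_pos
    have hsplit : v * derivative ((X - C x) ^ (D + 1) * h) =
        (X - C x) ^ D * (C ((D + 1 : ℕ) : R) * v * h) +
          (X - C x) ^ (D + 1) * (v * derivative h) := by
      rw [derivative_mul, derivative_X_sub_C_pow]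
      simp only [add_tsub_cancel_right, map_natCast]
      ring
    rw [hsplit, dvd_add_left (Dvd.intro _ rfl), pow_succ,
      mul_dvd_mul_iff_left (pow_ne_zero D (X_sub_C_ne_zero x)), dvd_iff_isRoot] at hstep
    simpa [hv, hD (D + 1) D.succ_pos (Nat.lt_succ_self _), -Nat.cast_add]
      using hstep

lemma totalDegree_mkDerivation_le {σ : Type*} {f : σ → MvPolynomial σ R} {n : ℕ}
    (hf : ∀ i, (f i).totalDegree ≤ n + 1) (G : MvPolynomial σ R) :
    (MvPolynomial.mkDerivation R f G).totalDegree ≤ G.totalDegree + n := by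
  conv_lhs => rw [G.as_sum, map_sum]
  refine MvPolynomial.totalDegree_finsetSum_le fun s hs => ?_
  rw [MvPolynomial.mkDerivation_monomial]
  refine (MvPolynomial.totalDegree_smul_le _ _).trans
    (MvPolynomial.totalDegree_finsetSum_le fun i hi => (MvPolynomial.totalDegree_mul _ _).trans ?_)
  have hmono : (MvPolynomial.monomial (s - Finsupp.single i 1) ((s i : ℕ) : R)).totalDegree + 1 ≤
      s.degree := by
    have hle : Finsupp.single i 1 ≤ s :=
      Finsupp.single_le_iff.mpr (Nat.one_le_iff_ne_zero.mpr (Finsupp.mem_support_iff.mp hi))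
    calc _ ≤ (s - Finsupp.single i 1).degree + (Finsupp.single i 1).degree := by
          rw [Finsupp.degree_single]
          gcongr
          exact MvPolynomial.totalDegree_monomial_le _ _
      _ = s.degree := by rw [← map_add, tsub_add_cancel_of_le hle]
  have hs' : s.degree ≤ G.totalDegree := MvPolynomial.le_totalDegree hs
  have := hf i
  omega

end General

/-! ### The truncated logarithm and Stepanov's method -/

variable {p : ℕ} [Fact p.Prime]

/-- The truncated logarithm `L = ∑_{0 < i < p} Xⁱ / i` over `ZMod p`, the reduction of
`-log (1 - X)` (the term `i = 0` vanishes because `0⁻¹ = 0`). -/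
def truncLog (p : ℕ) [Fact p.Prime] : (ZMod p)[X] :=
  ∑ i ∈ range p, C ((i : ZMod p)⁻¹) * X ^ i

lemma natCast_zmod_ne_zero {n : ℕ} (h0 : 0 < n) (hn : n < p) : (n : ZMod p) ≠ 0 := by
  rw [Ne, ZMod.natCast_eq_zero_iff]
  exact Nat.not_dvd_of_pos_of_lt h0 hn

lemma one_sub_X_mul_derivative_truncLog :
    (1 - X) * derivative (truncLog p) = 1 - X ^ (p - 1) := by
  obtain ⟨q, rfl⟩ : ∃ q, p = q + 1 := ⟨p - 1, (Nat.succ_pred (NeZero.ne p)).symm⟩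
  have hderiv : derivative (truncLog (q + 1)) = ∑ i ∈ range q, (X : (ZMod (q + 1))[X]) ^ i := by
    rw [truncLog, derivative_sum, sum_range_succ']
    simp only [Nat.cast_zero, pow_zero, mul_one, derivative_C, add_zero]
    refine sum_congr rfl fun i hi => ?_
    have hi0 := natCast_zmod_ne_zero i.succ_pos (Nat.succ_lt_succ (mem_range.mp hi))
    rw [derivative_C_mul_X_pow, inv_mul_cancel₀ hi0]
    simp
  rw [hderiv, Nat.add_sub_cancel]
  exact mul_neg_geom_sum X q

lemma natDegree_truncLog_le : (truncLog p).natDegree ≤ p - 1 :=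
  natDegree_sum_le_of_forall_le _ _ fun _ hi =>
    (natDegree_C_mul_X_pow_le _ _).trans (Nat.le_sub_one_of_lt (mem_range.mp hi))

/-- The polynomial `∑ᵢ (1 - X)ⁱ gᵢ(L)` formed from a finite family `g` and the truncated
logarithm `L`. -/
def logComb {A : ℕ} (g : Fin A → (ZMod p)[X]) : (ZMod p)[X] :=
  ∑ i : Fin A, (1 - X) ^ (i : ℕ) * (g i).comp (truncLog p)

lemma one_sub_X_mul_derivative_logComb {A : ℕ} (g : Fin A → (ZMod p)[X]) (c : ZMod p) :
    (1 - X) * derivative (logComb g) + C c * logComb g +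
        X ^ (p - 1) * logComb (fun l => derivative (g l)) =
      logComb fun l => C (c - (l : ℕ)) * g l + derivative (g l) := by
  simp only [logComb, derivative_sum, mul_sum, ← sum_add_distrib]
  refine sum_congr rfl fun l _ => ?_
  have hpow : (1 - X) * derivative ((1 - X : (ZMod p)[X]) ^ (l : ℕ)) =
      -C ((l : ℕ) : ZMod p) * (1 - X) ^ (l : ℕ) := by
    rcases (l : ℕ) with _ | n
    · simp
    · rw [derivative_pow]
      simp
      ring
  rw [derivative_mul, derivative_comp]
  simp only [add_comp, mul_comp, C_sub, C_comp, sub_comp]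
  linear_combination (g l).comp (truncLog p) * hpow +
    ((1 - X) ^ (l : ℕ) * (derivative (g l)).comp (truncLog p)) *
      one_sub_X_mul_derivative_truncLog (p := p)

lemma X_pow_dvd_logComb_of_X_pow_succ_dvd {A k : ℕ} (hk : k < p) (g : Fin A → (ZMod p)[X])
    (c : ZMod p) (h : X ^ (k + 1) ∣ logComb g) :
    X ^ k ∣ logComb fun l => C (c - (l : ℕ)) * g l + derivative (g l) := by
  have hk' : (X : (ZMod p)[X]) ^ k ∣ logComb g := (pow_dvd_pow _ k.le_succ).trans h
  rw [← one_sub_X_mul_derivative_logComb]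
  refine dvd_add (dvd_add (Dvd.dvd.mul_left ?_ _) (hk'.mul_left _))
    (Dvd.dvd.mul_right (pow_dvd_pow _ (by omega)) _)
  simpa using pow_sub_one_dvd_derivative_of_pow_dvd h

/- Choose `i` with `gᵢ ≠ 0`. The operator `(1 - X) d/dX + i` acts on the coefficients modulo
`X ^ (p - 1)` by `g_l ↦ (i - l) g_l + g_l'`, which lowers the degree of `gᵢ` and costs one power of
`X`; by induction it kills every coefficient, so `g_l = 0` for `l ≠ i` and `gᵢ` is constant. -/
lemma eq_zero_of_X_pow_dvd_logComb {A μ : ℕ} (hA : A ≤ p) (hμ : μ ≤ p) {g : Fin A → (ZMod p)[X]}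
    {B : Fin A → ℕ} (hg : ∀ i, g i ∈ degreeLT (ZMod p) (B i)) (hB : ∑ i, B i ≤ μ)
    (h : X ^ μ ∣ logComb g) : g = 0 := by
  induction μ generalizing g B with
  | zero =>
    ext1 i
    have hBi : B i = 0 := by simp only [nonpos_iff_eq_zero, sum_eq_zero_iff] at hB; simp [hB]
    simpa [hBi, mem_degreeLT] using hg i
  | succ k ih =>
    by_contra hg0
    obtain ⟨i, hi⟩ := Function.ne_iff.mp hg0
    have hsum : B i + ∑ l ∈ univ.erase i, B l ≤ k + 1 := by rwa [add_sum_erase _ _ (mem_univ i)]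
    have hBi : B i ≠ 0 := fun h0 => hi (by simpa [h0, mem_degreeLT] using hg i)
    have hg' : (fun l : Fin A => C ((i : ℕ) - (l : ℕ) : ZMod p) * g l + derivative (g l)) = 0 := by
      refine ih (by omega) (B := Function.update B i (B i - 1)) (fun l => ?_) ?_
        (X_pow_dvd_logComb_of_X_pow_succ_dvd (by omega) g _ h)
      · rcases eq_or_ne l i with rfl | hli
        · simpa using derivative_mem_degreeLT (hg l)
        · rw [Function.update_of_ne hli, ← smul_eq_C_mul]
          exact Submodule.add_mem _ (Submodule.smul_mem _ _ (hg l))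
            (degreeLT_mono (Nat.sub_le _ 1) (derivative_mem_degreeLT (hg l)))
      · rw [sum_update_of_mem (mem_univ i), sdiff_singleton_eq_erase]
        omega
    have hother : ∀ l ≠ i, g l = 0 := fun l hli =>
      eq_zero_of_C_mul_add_derivative_eq_zero (sub_ne_zero.mpr fun hil => hli (Fin.ext
        (Nat.ModEq.eq_of_lt_of_lt ((ZMod.natCast_eq_natCast_iff _ _ _).mp hil) (by omega)
          (by omega)).symm)) (congrFun hg' l)
    have hdeg : (g i).natDegree < p := by
      rw [natDegree_lt_iff_degree_lt hi]
      exact (mem_degreeLT.mp (hg i)).trans_le (by exact_mod_cast (by omega : B i ≤ p))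
    obtain ⟨a, ha⟩ := natDegree_eq_zero.mp
      (natDegree_eq_zero_of_derivative_eq_zero_of_natDegree_lt (p := p) hdeg
        (by simpa using congrFun hg' i))
    have hsingle : logComb g = (1 - X) ^ (i : ℕ) * C a := by
      rw [logComb, sum_eq_single i (fun l _ hli => by simp [hother l hli]) (by simp), ← ha, C_comp]
    have hX : X ∣ (1 - X) ^ (i : ℕ) * C a := hsingle ▸ (dvd_pow_self X k.succ_ne_zero).trans h
    refine hi (ha ▸ C_eq_zero.mpr ?_)
    simpa [X_dvd_iff, coeff_zero_eq_eval_zero] using hX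

lemma eq_zero_of_sum_X_pow_mul_logComb_eq_zero {A B C : ℕ} (hA : A ≤ p) (hAB : A * B ≤ p)
    {g : Fin C → Fin A → (ZMod p)[X]} (hg : ∀ c a, g c a ∈ degreeLT (ZMod p) B)
    (h : ∑ c : Fin C, X ^ (p * (c : ℕ)) * logComb (g c) = 0) : g = 0 := by
  induction C with
  | zero => exact Subsingleton.elim _ _
  | succ C ih =>
    have htail : ∑ c : Fin C, X ^ (p * (c.succ : ℕ)) * logComb (g c.succ) =
        X ^ p * ∑ c : Fin C, X ^ (p * (c : ℕ)) * logComb (g c.succ) := by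
      rw [mul_sum]
      refine sum_congr rfl fun c _ => ?_
      rw [Fin.val_succ, mul_add_one, pow_add]
      ring
    rw [Fin.sum_univ_succ, htail] at h
    have hzero : g 0 = 0 := by
      refine eq_zero_of_X_pow_dvd_logComb hA le_rfl (hg 0) (by simpa using hAB) ?_
      exact ⟨_, (by simpa using eq_neg_of_add_eq_zero_left h :
        logComb (g 0) = X ^ p * -∑ c : Fin C, X ^ (p * (c : ℕ)) * logComb (g c.succ))⟩
    have hrest : ∑ c : Fin C, X ^ (p * (c : ℕ)) * logComb (g c.succ) = 0 := by
      simpa [hzero, logComb] using h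
    have hsucc := ih (fun c => hg c.succ) hrest
    ext1 c
    exact Fin.cases hzero (fun c => congrFun hsucc c) c

/-- Substitution of `X`, the truncated logarithm and `X ^ p` for the three variables. -/
def logSubst (p : ℕ) [Fact p.Prime] : MvPolynomial (Fin 3) (ZMod p) →ₐ[ZMod p] (ZMod p)[X] :=
  MvPolynomial.aeval ![X, truncLog p, X ^ p]

/-- The derivation of `(ZMod p)[X₀, X₁, X₂]` which `logSubst` intertwines with
`X (1 - X) d/dX`. -/
def logDerivation (p : ℕ) [Fact p.Prime] :
    Derivation (ZMod p) (MvPolynomial (Fin 3) (ZMod p)) (MvPolynomial (Fin 3) (ZMod p)) :=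
  MvPolynomial.mkDerivation (ZMod p)
    ![MvPolynomial.X 0 * (1 - MvPolynomial.X 0), MvPolynomial.X 0 - MvPolynomial.X 2, 0]

lemma totalDegree_one_sub_X_le {R σ : Type*} [CommRing R] (i : σ) :
    (1 - MvPolynomial.X i : MvPolynomial σ R).totalDegree ≤ 1 := by
  cases subsingleton_or_nontrivial R
  · simp [Subsingleton.elim _ (0 : MvPolynomial σ R)]
  simpa using MvPolynomial.totalDegree_sub (1 : MvPolynomial σ R) (MvPolynomial.X i)

lemma totalDegree_iterate_logDerivation_le (G : MvPolynomial (Fin 3) (ZMod p)) (n : ℕ) :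
    ((logDerivation p)^[n] G).totalDegree ≤ G.totalDegree + n := by
  induction n with
  | zero => rfl
  | succ n ih =>
    rw [Function.iterate_succ_apply']
    refine (totalDegree_mkDerivation_le (n := 1) (fun i => ?_) _).trans (by omega)
    fin_cases i
    · have := totalDegree_one_sub_X_le (R := ZMod p) (0 : Fin 3)
      refine (MvPolynomial.totalDegree_mul _ _).trans ?_
      rw [MvPolynomial.totalDegree_X]
      omega
    · exact (MvPolynomial.totalDegree_sub _ _).trans (by simp)
    · simp

lemma logSubst_logDerivation_X (i : Fin 3) :
    logSubst p (logDerivation p (MvPolynomial.X i)) =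
      X * (1 - X) * derivative (logSubst p (MvPolynomial.X i)) := by
  rw [logDerivation, logSubst, MvPolynomial.mkDerivation_X, MvPolynomial.aeval_X]
  fin_cases i
  · simp
  · have hX : (X : (ZMod p)[X]) ^ p = X * X ^ (p - 1) := by
      rw [← pow_succ', Nat.sub_add_cancel (Fact.out : p.Prime).one_le]
    simp only [Fin.mk_one, Matrix.cons_val_one, Matrix.cons_val_zero, map_sub,
      MvPolynomial.aeval_X, Matrix.cons_val, hX]
    linear_combination -X * one_sub_X_mul_derivative_truncLog (p := p)
  · simp [derivative_X_pow]

lemma logSubst_logDerivation (G : MvPolynomial (Fin 3) (ZMod p)) :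
    logSubst p (logDerivation p G) = X * (1 - X) * derivative (logSubst p G) := by
  induction G using MvPolynomial.induction_on with
  | C a => simp [logSubst, MvPolynomial.derivation_C]
  | add f g hf hg => simp only [map_add, hf, hg, mul_add]
  | mul_X f i hf =>
    rw [Derivation.leibniz, smul_eq_mul, smul_eq_mul, map_add, map_mul, map_mul, map_mul, hf,
      logSubst_logDerivation_X, derivative_mul]
    ring

lemma logSubst_iterate_logDerivation (G : MvPolynomial (Fin 3) (ZMod p)) (n : ℕ) :
    logSubst p ((logDerivation p)^[n] G) =
      (fun f => X * (1 - X) * derivative f)^[n] (logSubst p G) :=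
  (show Function.Semiconj (logSubst p) (logDerivation p) fun f => X * (1 - X) * derivative f from
    logSubst_logDerivation).iterate_right n G

/-- Stepanov's auxiliary polynomial `∑ (1 - X₀)ᵃ g_{c,a}(X₁) X₂ᶜ` with undetermined coefficients
`g_{c,a}` of degree less than `B`. -/
def stepanovPoly (p : ℕ) [Fact p.Prime] (A B C : ℕ) :
    (Fin C → Fin A → degreeLT (ZMod p) B) →ₗ[ZMod p] MvPolynomial (Fin 3) (ZMod p) where
  toFun g := ∑ c : Fin C, ∑ a : Fin A, (1 - MvPolynomial.X 0) ^ (a : ℕ) *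
    aeval (MvPolynomial.X 1) (g c a : (ZMod p)[X]) * MvPolynomial.X 2 ^ (c : ℕ)
  map_add' g h := by simp [mul_add, add_mul, sum_add_distrib]
  map_smul' r g := by simp [smul_sum]

variable {A B C : ℕ} (g : Fin C → Fin A → degreeLT (ZMod p) B)

lemma natDegree_le_of_mem_degreeLT {R : Type*} [CommRing R] {n : ℕ} {f : R[X]}
    (hf : f ∈ degreeLT R n) : f.natDegree ≤ n - 1 := by
  rcases eq_or_ne f 0 with rfl | hf0
  · simp
  · exact Nat.le_sub_one_of_lt ((natDegree_lt_iff_degree_lt hf0).mpr (mem_degreeLT.mp hf))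

lemma totalDegree_aeval_X_le {R σ : Type*} [CommRing R] (i : σ) (f : R[X]) :
    (aeval (MvPolynomial.X i : MvPolynomial σ R) f).totalDegree ≤ f.natDegree := by
  cases subsingleton_or_nontrivial R
  · simp [Subsingleton.elim f 0]
  rw [aeval_eq_sum_range]
  refine MvPolynomial.totalDegree_finsetSum_le fun n hn => ?_
  refine (MvPolynomial.totalDegree_smul_le _ _).trans ?_
  rw [MvPolynomial.totalDegree_X_pow]
  exact Nat.le_of_lt_succ (mem_range.mp hn)

lemma totalDegree_stepanovPoly_le : (stepanovPoly p A B C g).totalDegree ≤ A + B + C := by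
  refine MvPolynomial.totalDegree_finsetSum_le fun c _ =>
    MvPolynomial.totalDegree_finsetSum_le fun a _ => ?_
  refine (MvPolynomial.totalDegree_mul _ _).trans (add_le_add
    ((MvPolynomial.totalDegree_mul _ _).trans (add_le_add ?_ ?_)) ?_)
  · exact (MvPolynomial.totalDegree_pow _ _).trans
      ((Nat.mul_le_mul_left _ (totalDegree_one_sub_X_le _)).trans (by omega))
  · exact (totalDegree_aeval_X_le _ _).trans
      ((natDegree_le_of_mem_degreeLT (g c a).2).trans (Nat.sub_le _ _))
  · rw [MvPolynomial.totalDegree_X_pow]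
    exact c.2.le

lemma logSubst_stepanovPoly :
    logSubst p (stepanovPoly p A B C g) =
      ∑ c : Fin C, X ^ (p * (c : ℕ)) * logComb fun a => (g c a : (ZMod p)[X]) := by
  simp only [stepanovPoly, logSubst, logComb, LinearMap.coe_mk, AddHom.coe_mk, map_sum, mul_sum]
  refine sum_congr rfl fun c _ => sum_congr rfl fun a _ => ?_
  rw [map_mul, map_mul, ← aeval_algHom_apply]
  simp only [map_pow, map_sub, map_one, MvPolynomial.aeval_X, Matrix.cons_val_zero,
    Matrix.cons_val_one, Matrix.cons_val, comp_eq_aeval, pow_mul]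
  ring

lemma natDegree_logSubst_stepanovPoly_le (hA : A ≤ p) :
    (logSubst p (stepanovPoly p A B C g)).natDegree ≤ p * (B + C) := by
  rw [logSubst_stepanovPoly]
  refine natDegree_sum_le_of_forall_le _ _ fun c _ => natDegree_mul_le.trans ?_
  have hcomb : (logComb fun a => (g c a : (ZMod p)[X])).natDegree ≤ p + p * B := by
    refine natDegree_sum_le_of_forall_le _ _ fun a _ =>
      natDegree_mul_le.trans (add_le_add ?_ ?_)
    · refine (natDegree_pow_le_of_le (a : ℕ) (natDegree_sub_le 1 X)).trans ?_
      simpa using a.2.le.trans hA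
    · rw [natDegree_comp, mul_comm p]
      exact Nat.mul_le_mul ((natDegree_le_of_mem_degreeLT (g c a).2).trans (Nat.sub_le _ _))
        (natDegree_truncLog_le.trans (Nat.sub_le _ _))
  have hc : p * ((c : ℕ) + 1) ≤ p * C := Nat.mul_le_mul_left _ c.2
  rw [natDegree_X_pow]
  linarith

lemma logSubst_stepanovPoly_ne_zero (hA : A ≤ p) (hAB : A * B ≤ p) (hg : g ≠ 0) :
    logSubst p (stepanovPoly p A B C g) ≠ 0 := by
  rw [logSubst_stepanovPoly]
  refine fun h => hg (funext₂ fun c a => Subtype.ext ?_)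
  exact congrFun (congrFun (eq_zero_of_sum_X_pow_mul_logComb_eq_zero hA hAB
    (fun c a => (g c a).2) h) c) a

/-- The substitution `X`, `r`, `X`, which agrees with `logSubst` at the points `x ∈ ZMod p` with
`L(x) = r`, where `x ^ p = x`. -/
def levelSubst (r : ZMod p) : MvPolynomial (Fin 3) (ZMod p) →ₐ[ZMod p] (ZMod p)[X] :=
  MvPolynomial.aeval ![X, Polynomial.C r, X]

lemma eval_logSubst_eq_eval_levelSubst {r x : ZMod p} (hx : (truncLog p).eval x = r)
    (G : MvPolynomial (Fin 3) (ZMod p)) : (logSubst p G).eval x = (levelSubst r G).eval x := by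
  have : (aeval x).comp (logSubst p) = (aeval x).comp (levelSubst r) := by
    ext i
    fin_cases i <;> simp [logSubst, levelSubst, hx]
  simpa using DFunLike.congr_fun this G

lemma natDegree_levelSubst_le (r : ZMod p) (G : MvPolynomial (Fin 3) (ZMod p)) :
    (levelSubst r G).natDegree ≤ G.totalDegree := by
  simpa [levelSubst] using MvPolynomial.aeval_natDegree_le (n := 1) G le_rfl
    ![X, Polynomial.C r, X] (by intro i; fin_cases i <;> simp)

lemma exists_levelSubst_iterate_logDerivation_eq_zero {D : ℕ}
    (hD : D * (A + B + C + D + 1) < A * B * C) (r : ZMod p) :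
    ∃ g : Fin C → Fin A → degreeLT (ZMod p) B, g ≠ 0 ∧
      ∀ n < D, levelSubst r ((logDerivation p)^[n] (stepanovPoly p A B C g)) = 0 := by
  set M := A + B + C + D + 1
  let coeffs : (Fin C → Fin A → degreeLT (ZMod p) B) →ₗ[ZMod p] (Fin D × Fin M → ZMod p) :=
    LinearMap.pi fun i => lcoeff (ZMod p) (i.2 : ℕ) ∘ₗ (levelSubst r).toLinearMap ∘ₗ
      ((logDerivation p).toLinearMap ^ (i.1 : ℕ)) ∘ₗ stepanovPoly p A B C
  have hker : LinearMap.ker coeffs ≠ ⊥ := by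
    refine LinearMap.ker_ne_bot_of_finrank_lt ?_
    have hB : Module.finrank (ZMod p) (degreeLT (ZMod p) B) = B := by
      simpa using (degreeLTEquiv (ZMod p) B).finrank_eq
    simpa [Module.finrank_pi_fintype, hB, mul_comm, mul_left_comm] using hD
  obtain ⟨g, hg, hg0⟩ := Submodule.exists_mem_ne_zero_of_ne_bot hker
  refine ⟨g, hg0, fun n hn => ?_⟩
  have hdeg : (levelSubst r ((logDerivation p)^[n] (stepanovPoly p A B C g))).natDegree < M := by
    have h₁ := natDegree_levelSubst_le r ((logDerivation p)^[n] (stepanovPoly p A B C g))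
    have h₂ := totalDegree_iterate_logDerivation_le (stepanovPoly p A B C g) n
    have h₃ := totalDegree_stepanovPoly_le g
    omega
  ext i
  by_cases hi : i < M
  · simpa [coeffs, Module.End.pow_apply] using
      congrFun (LinearMap.mem_ker.mp hg) (⟨n, hn⟩, ⟨i, hi⟩)
  · rw [coeff_eq_zero_of_natDegree_lt (by omega), coeff_zero]

/- The auxiliary polynomial `Ψ` is nonzero of degree at most `p (B + C)` and vanishes to order `D`
on the level set. -/
theorem card_level_truncLog_mul_le {D : ℕ} (hAB : A * B ≤ p) (hDp : D ≤ p)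
    (hD : D * (A + B + C + D + 1) < A * B * C) {r : ZMod p} {Z : Finset (ZMod p)}
    (hZ : ∀ x ∈ Z, x ≠ 0 ∧ x ≠ 1 ∧ (truncLog p).eval x = r) : #Z * D ≤ p * (B + C) := by
  obtain ⟨g, hg0, hg⟩ := exists_levelSubst_iterate_logDerivation_eq_zero hD r
  set Ψ := logSubst p (stepanovPoly p A B C g)
  have hA : A ≤ p := by
    refine le_trans (Nat.le_mul_of_pos_right A (Nat.pos_of_ne_zero ?_)) hAB
    rintro rfl
    simp at hD
  have hmult : ∀ x ∈ Z, (X - Polynomial.C x) ^ D ∣ Ψ := by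
    intro x hx
    obtain ⟨hx0, hx1, hxr⟩ := hZ x hx
    refine X_sub_C_pow_dvd_of_iterate_mul_derivative (v := X * (1 - X)) ?_
      (fun n h0 hn => natCast_zmod_ne_zero h0 (hn.trans_le hDp)) fun n hn => ?_
    · simp [hx0, sub_ne_zero.mpr hx1.symm]
    · rw [← logSubst_iterate_logDerivation, eval_logSubst_eq_eval_levelSubst hxr, hg n hn,
        eval_zero]
  have hprod : ∏ x ∈ Z, (X - Polynomial.C x) ^ D ∣ Ψ :=
    Finset.prod_dvd_of_coprime
      (fun x _ y _ hxy => (pairwise_coprime_X_sub_C Function.injective_id hxy).pow) hmult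
  calc #Z * D = (∏ x ∈ Z, (X - Polynomial.C x) ^ D).natDegree := by
        rw [natDegree_prod _ _ fun x _ => pow_ne_zero _ (X_sub_C_ne_zero x)]
        simp
    _ ≤ Ψ.natDegree := natDegree_le_of_dvd hprod (logSubst_stepanovPoly_ne_zero g hA hAB hg0)
    _ ≤ p * (B + C) := natDegree_logSubst_stepanovPoly_le g hA

end Polynomial

/-! ### The Teichmüller lift and Heilbronn sums -/

section Heilbronn

variable {p : ℕ} [Fact p.Prime]

lemma intCast_pow_zmod_sq_congr {x y : ℤ} (h : (x : ZMod p) = y) :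
    (x : ZMod (p ^ 2)) ^ p = (y : ZMod (p ^ 2)) ^ p := by
  rw [ZMod.intCast_eq_intCast_iff_dvd_sub] at h
  have hpow := dvd_sub_pow_of_dvd_sub (p := p) h 1
  rw [pow_one] at hpow
  exact_mod_cast (ZMod.intCast_eq_intCast_iff_dvd_sub (x ^ p) (y ^ p) (p ^ 2)).mpr
    (by exact_mod_cast hpow)

/-- The Teichmüller lift `ZMod p → ZMod (p ^ 2)`, sending the class of an integer `x` to the class
of `x ^ p`. -/
def teich (p : ℕ) [Fact p.Prime] : ZMod p →* ZMod (p ^ 2) where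
  toFun a := ((a.cast : ℤ) : ZMod (p ^ 2)) ^ p
  map_one' := by
    rw [intCast_pow_zmod_sq_congr (y := 1) (by simp), Int.cast_one, one_pow]
  map_mul' a b := by
    rw [← mul_pow, ← Int.cast_mul]
    exact intCast_pow_zmod_sq_congr (by simp)

lemma teich_intCast (x : ℤ) : teich p (x : ZMod p) = (x : ZMod (p ^ 2)) ^ p :=
  intCast_pow_zmod_sq_congr (by simp)

/-- Reduction `ZMod (p ^ 2) → ZMod p`. -/
def modP (p : ℕ) : ZMod (p ^ 2) →+* ZMod p :=
  ZMod.castHom (dvd_pow_self p two_ne_zero) (ZMod p)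

lemma modP_teich (a : ZMod p) : modP p (teich p a) = a := by
  obtain ⟨x, rfl⟩ := ZMod.intCast_surjective a
  rw [teich_intCast, map_pow, map_intCast, ZMod.pow_card]

/-- The embedding `x ↦ p x` of `ZMod p` into `ZMod (p ^ 2)`. -/
def mulP (p : ℕ) : ZMod p →+ ZMod (p ^ 2) :=
  ZMod.lift p ⟨zmultiplesHom (ZMod (p ^ 2)) (p : ZMod (p ^ 2)), by
    rw [zmultiplesHom_apply, natCast_zsmul, nsmul_eq_mul, ← sq]
    exact_mod_cast ZMod.natCast_self (p ^ 2)⟩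

lemma mulP_intCast (p : ℕ) (x : ℤ) : mulP p (x : ZMod p) = (p * x : ZMod (p ^ 2)) := by
  rw [mulP, ZMod.lift_coe, zmultiplesHom_apply, zsmul_eq_mul, mul_comm]

lemma mul_mulP (k : ZMod (p ^ 2)) (x : ZMod p) : k * mulP p x = mulP p (modP p k * x) := by
  obtain ⟨k, rfl⟩ := ZMod.intCast_surjective k
  obtain ⟨x, rfl⟩ := ZMod.intCast_surjective x
  rw [map_intCast (modP p), ← Int.cast_mul, mulP_intCast p x, mulP_intCast, Int.cast_mul]
  ring

lemma stdAddChar_mulP (x : ZMod p) :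
    (ZMod.stdAddChar (mulP p x) : ℂ) = ZMod.stdAddChar x := by
  obtain ⟨x, rfl⟩ := ZMod.intCast_surjective x
  have hp : (p : ℂ) ≠ 0 := Nat.cast_ne_zero.mpr (NeZero.ne p)
  rw [mulP_intCast, show (p * x : ZMod (p ^ 2)) = ((p * x : ℤ) : ZMod (p ^ 2)) by push_cast; rfl,
    ZMod.stdAddChar_coe, ZMod.stdAddChar_coe]
  congr 1
  push_cast
  field_simp

lemma natCast_choose_pred_zmod {i : ℕ} (hi : i < p) : ((p - 1).choose i : ZMod p) = (-1) ^ i := by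
  induction i with
  | zero => simp
  | succ i ih =>
    have hpascal := Nat.choose_eq_choose_pred_add (k := i + 1) (Fact.out : p.Prime).pos i.succ_pos
    have hzero : ((p.choose (i + 1) : ℕ) : ZMod p) = 0 :=
      (ZMod.natCast_eq_zero_iff _ _).mpr ((Fact.out : p.Prime).dvd_choose_self i.succ_ne_zero hi)
    rw [hpascal, Nat.add_sub_cancel, Nat.cast_add, ih (by omega)] at hzero
    rw [pow_succ]
    linear_combination hzero

lemma natCast_choose_zmod_sq {i : ℕ} (hi : i + 1 < p) :
    (p.choose (i + 1) : ZMod (p ^ 2)) = mulP p ((-1) ^ i * ((i + 1 : ℕ) : ZMod p)⁻¹) := by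
  have hp : p.Prime := Fact.out
  obtain ⟨b, hb⟩ := hp.dvd_choose_self i.succ_ne_zero hi
  have hpred : (p - 1).choose i = b * (i + 1) := by
    have h := Nat.add_one_mul_choose_eq (p - 1) i
    rw [Nat.sub_add_cancel hp.one_le, hb] at h
    exact Nat.eq_of_mul_eq_mul_left hp.pos (h.trans (mul_assoc _ _ _))
  have hbi : (b : ZMod p) = (-1) ^ i * ((i + 1 : ℕ) : ZMod p)⁻¹ := by
    rw [eq_mul_inv_iff_mul_eq₀ (natCast_zmod_ne_zero i.succ_pos hi), ← Nat.cast_mul, ← hpred,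
      natCast_choose_pred_zmod (by omega)]
  rw [← hbi, hb, Nat.cast_mul]
  exact_mod_cast (mulP_intCast p b).symm

lemma teich_sub_teich_sub_one (hp2 : p ≠ 2) (x : ZMod p) :
    teich p x - teich p (x - 1) = 1 - mulP p ((truncLog p).eval x) := by
  obtain ⟨q, hq⟩ : ∃ q, p = q + 1 := ⟨p - 1, (Nat.succ_pred (NeZero.ne p)).symm⟩
  have hrange : range p = range (q + 1) := congrArg range hq
  have hodd : Odd p := (Fact.out : p.Prime).odd_of_ne_two hp2
  obtain ⟨x, rfl⟩ := ZMod.intCast_surjective x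
  have hterm : ∀ i ∈ range q,
      (x : ZMod (p ^ 2)) ^ (i + 1) * (-1) ^ (p - (i + 1)) * p.choose (i + 1) =
        mulP p (((i + 1 : ℕ) : ZMod p)⁻¹ * (x : ZMod p) ^ (i + 1)) := by
    intro i hi
    have hi' : i + 1 < p := by have := mem_range.mp hi; omega
    have hsign : ((-1) ^ (p - (i + 1)) : ZMod p) * (-1) ^ i = 1 := by
      rw [← pow_add, show p - (i + 1) + i = p - 1 by omega]
      exact (hodd.tsub_odd odd_one).neg_one_pow
    rw [natCast_choose_zmod_sq hi', mul_mulP]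
    simp only [map_mul, map_pow, map_intCast, map_neg, map_one]
    congr 1
    linear_combination (x : ZMod p) ^ (i + 1) * ((i + 1 : ℕ) : ZMod p)⁻¹ * hsign
  have hlog : mulP p ((truncLog p).eval (x : ZMod p)) =
      ∑ i ∈ range q, mulP p (((i + 1 : ℕ) : ZMod p)⁻¹ * (x : ZMod p) ^ (i + 1)) := by
    rw [truncLog, Polynomial.eval_finsetSum, map_sum, hrange, sum_range_succ']
    simp
  have hexpand : (x - 1 : ZMod (p ^ 2)) ^ p = -1 +
      ∑ i ∈ range q, (x : ZMod (p ^ 2)) ^ (i + 1) * (-1) ^ (p - (i + 1)) * p.choose (i + 1) +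
        (x : ZMod (p ^ 2)) ^ p := by
    rw [sub_eq_add_neg, add_pow, sum_range_succ]
    rw [hrange, sum_range_succ']
    simp [hodd.neg_one_pow, add_comm]
  rw [← Int.cast_one (R := ZMod p), ← Int.cast_sub, teich_intCast, teich_intCast, Int.cast_sub,
    Int.cast_one, hexpand, hlog, sum_congr rfl hterm]
  ring

lemma sum_addChar_mul_conj {R : Type*} [CommRing R] [Fintype R] [DecidableEq R]
    {χ : AddChar R ℂ} (hχ : χ.IsPrimitive) (a b : R) :
    ∑ v, χ (a * v) * (starRingEnd ℂ) (χ (b * v)) = if a = b then (Fintype.card R : ℂ) else 0 := by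
  have hdiff : ∀ v, χ (a * v) * (starRingEnd ℂ) (χ (b * v)) = χ (v * (a - b)) := by
    intro v
    rw [← AddChar.map_neg_eq_conj, ← AddChar.map_add_eq_mul]
    congr 1
    ring
  simp only [hdiff, AddChar.sum_mulShift _ hχ, sub_eq_zero]
  split_ifs <;> simp

lemma sum_norm_sq_sum_mul_addChar {R X : Type*} [CommRing R] [Fintype R] [DecidableEq R]
    {χ : AddChar R ℂ} (hχ : χ.IsPrimitive) (s : Finset X) (c : X → ℂ) (A : X → R) :
    ((∑ v, ‖∑ x ∈ s, c x * χ (A x * v)‖ ^ 2 : ℝ) : ℂ) =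
      Fintype.card R * ∑ x ∈ s, ∑ y ∈ s with A x = A y, c x * (starRingEnd ℂ) (c y) := by
  push_cast
  simp_rw [← Complex.mul_conj', map_sum, sum_mul_sum]
  rw [sum_comm, mul_sum]
  refine sum_congr rfl fun x _ => ?_
  rw [sum_comm, sum_filter, mul_sum]
  refine sum_congr rfl fun y _ => ?_
  calc ∑ v, c x * χ (A x * v) * (starRingEnd ℂ) (c y * χ (A y * v))
      = c x * (starRingEnd ℂ) (c y) * ∑ v, χ (A x * v) * (starRingEnd ℂ) (χ (A y * v)) := by
        rw [mul_sum]
        exact sum_congr rfl fun v _ => by rw [map_mul (starRingEnd ℂ)]; ring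
    _ = _ := by rw [sum_addChar_mul_conj hχ]; split_ifs <;> ring

/-- Heilbronn's exponential sum `∑_{u ∈ (ZMod p)ˣ} exp (2 π i k uᵖ / p²)`. -/
def heilbronnSum (p : ℕ) [Fact p.Prime] (k : ZMod (p ^ 2)) : ℂ :=
  ∑ u : (ZMod p)ˣ, ZMod.stdAddChar (k * teich p u)

lemma heilbronnSum_mul_teich (k : ZMod (p ^ 2)) (w : (ZMod p)ˣ) :
    heilbronnSum p (k * teich p w) = heilbronnSum p k :=
  Fintype.sum_equiv (Equiv.mulLeft w) _ _ fun u => by simp [mul_assoc]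

lemma norm_sq_heilbronnSum (k : ZMod (p ^ 2)) :
    (‖heilbronnSum p k‖ ^ 2 : ℂ) = ∑ w : (ZMod p)ˣ, heilbronnSum p (k * (1 - teich p w)) := by
  rw [← Complex.mul_conj']
  simp only [heilbronnSum, map_sum, sum_mul_sum]
  conv_rhs => rw [sum_comm]
  refine sum_congr rfl fun u _ => Fintype.sum_equiv (Equiv.mulLeft u⁻¹) _ _ fun v => ?_
  have hv : teich p u * teich p (u⁻¹ * v : (ZMod p)ˣ) = teich p v := by
    rw [← map_mul, ← Units.val_mul, mul_inv_cancel_left]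
  rw [Equiv.coe_mulLeft, ← AddChar.map_neg_eq_conj, ← AddChar.map_add_eq_mul]
  congr 1
  linear_combination k * hv

lemma heilbronnSum_mul_one_sub_teich (hp2 : p ≠ 2) (k : ZMod (p ^ 2)) {w : (ZMod p)ˣ}
    (hw : w ≠ 1) : heilbronnSum p (k * (1 - teich p w)) =
      heilbronnSum p (k * (1 - mulP p ((truncLog p).eval (1 - (w : ZMod p))⁻¹))) := by
  have h1w : 1 - (w : ZMod p) ≠ 0 := sub_ne_zero.mpr fun h => hw (Units.ext h.symm)
  set x := (1 - (w : ZMod p))⁻¹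
  have hx : x * (1 - w) = 1 := inv_mul_cancel₀ h1w
  have hteich : teich p x * teich p (1 - w) = 1 := by rw [← map_mul, hx, map_one]
  have hteich' : teich p (x - 1) * teich p (1 - w) = teich p w := by
    rw [← map_mul]
    congr 1
    linear_combination hx
  rw [← heilbronnSum_mul_teich (k * (1 - mulP p _)) (Units.mk0 _ h1w),
    ← teich_sub_teich_sub_one hp2, Units.val_mk0]
  congr 1
  linear_combination k * (hteich' - hteich)

lemma sum_norm_sq_heilbronnSum_mul_one_sub_mulP {k : ZMod (p ^ 2)} (hk : IsUnit k) :
    ∑ r, ‖heilbronnSum p (k * (1 - mulP p r))‖ ^ 2 = p * (p - 1) := by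
  have hk' : -modP p k ≠ 0 := (hk.map (modP p)).neg.ne_zero
  have hsplit : ∀ r, heilbronnSum p (k * (1 - mulP p r)) = ∑ u : (ZMod p)ˣ,
      ZMod.stdAddChar (k * teich p u) * ZMod.stdAddChar (-modP p k * (u : ZMod p) * r) := by
    intro r
    refine sum_congr rfl fun u _ => ?_
    have h := mul_mulP (k * teich p u) r
    rw [map_mul (modP p), modP_teich] at h
    rw [← stdAddChar_mulP (-modP p k * (u : ZMod p) * r), ← AddChar.map_add_eq_mul, neg_mul,
      neg_mul, map_neg, ← h]
    congr 1
    ring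
  have hdiag : ∀ u : (ZMod p)ˣ,
      ({v | -modP p k * u = -modP p k * v} : Finset (ZMod p)ˣ) = {u} := by
    intro u
    ext v
    simp only [mem_filter, mem_univ, true_and, mem_singleton, mul_right_inj' hk', Units.val_inj,
      eq_comm]
  simp only [hsplit]
  refine Complex.ofReal_injective ?_
  rw [sum_norm_sq_sum_mul_addChar (ZMod.isPrimitive_stdAddChar p)]
  simp only [hdiag, sum_singleton, Complex.mul_conj', AddChar.norm_apply]
  simp [Nat.totient_prime (Fact.out : p.Prime), Nat.cast_sub (Fact.out : p.Prime).one_le]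

lemma sum_norm_sq_heilbronnSum_truncLog_le {M : ℝ}
    (hM : ∀ r, (#{x : ZMod p | x ≠ 0 ∧ x ≠ 1 ∧ (truncLog p).eval x = r} : ℝ) ≤ M)
    {k : ZMod (p ^ 2)} (hk : IsUnit k) :
    ∑ w ∈ univ.erase (1 : (ZMod p)ˣ),
        ‖heilbronnSum p (k * (1 - mulP p ((truncLog p).eval (1 - (w : ZMod p))⁻¹)))‖ ^ 2 ≤
      M * (p * p) := by
  set h : ZMod p → ℝ := fun r => ‖heilbronnSum p (k * (1 - mulP p r))‖
  set g : (ZMod p)ˣ → ZMod p := fun w => (truncLog p).eval (1 - (w : ZMod p))⁻¹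
  set s : Finset (ZMod p)ˣ := univ.erase 1
  have hM0 : 0 ≤ M := (Nat.cast_nonneg _).trans (hM 0)
  have hfiber : ∀ r, (#{w ∈ s | g w = r} : ℝ) ≤ M := by
    refine fun r => le_trans (Nat.cast_le.mpr ?_) (hM r)
    refine card_le_card_of_injOn (fun w => (1 - (w : ZMod p))⁻¹) (fun w hw => ?_)
      fun w _ w' _ hww' => Units.ext (sub_right_injective (inv_injective hww'))
    have hw' : (w : ZMod p) ≠ 1 := fun h => by simp_all [s]
    simpa [sub_eq_zero, hw'.symm, w.ne_zero] using (mem_filter.mp hw).2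
  calc ∑ w ∈ s, h (g w) ^ 2 = ∑ r, #{w ∈ s | g w = r} * h r ^ 2 := by
        simp only [← sum_fiberwise s g, ← nsmul_eq_mul, ← sum_const]
        exact sum_congr rfl fun r _ => sum_congr rfl fun w hw => by rw [(mem_filter.mp hw).2]
    _ ≤ ∑ r, M * h r ^ 2 := by gcongr with r; exact hfiber r
    _ = M * (p * (p - 1)) := by
        rw [← mul_sum, sum_norm_sq_heilbronnSum_mul_one_sub_mulP hk]
    _ ≤ M * (p * p) := by gcongr; linarith

lemma norm_sq_heilbronnSum_le (hp2 : p ≠ 2) {M : ℝ}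
    (hM : ∀ r, (#{x : ZMod p | x ≠ 0 ∧ x ≠ 1 ∧ (truncLog p).eval x = r} : ℝ) ≤ M)
    {k : ZMod (p ^ 2)} (hk : IsUnit k) : ‖heilbronnSum p k‖ ^ 2 ≤ p + p * √(M * p) := by
  set h : ZMod p → ℝ := fun r => ‖heilbronnSum p (k * (1 - mulP p r))‖
  set g : (ZMod p)ˣ → ZMod p := fun w => (truncLog p).eval (1 - (w : ZMod p))⁻¹
  set s : Finset (ZMod p)ˣ := univ.erase 1
  have hs : (#s : ℝ) ≤ p := by
    have : #s ≤ Fintype.card (ZMod p)ˣ := card_le_univ s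
    exact_mod_cast this.trans ((ZMod.card_units p).trans_le (Nat.sub_le p 1))
  have hsum : ∑ w ∈ s, h (g w) ^ 2 ≤ M * (p * p) := sum_norm_sq_heilbronnSum_truncLog_le hM hk
  have hzero : ‖heilbronnSum p 0‖ ≤ p := by
    simpa [heilbronnSum] using Nat.totient_le p
  calc ‖heilbronnSum p k‖ ^ 2 = ‖∑ w : (ZMod p)ˣ, heilbronnSum p (k * (1 - teich p w))‖ := by
        rw [← norm_sq_heilbronnSum]
        simp
    _ ≤ ‖heilbronnSum p 0‖ + ∑ w ∈ s, h (g w) := by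
        refine (norm_sum_le _ _).trans_eq ?_
        rw [← add_sum_erase _ _ (mem_univ (1 : (ZMod p)ˣ))]
        congr 1
        · simp
        · exact sum_congr rfl fun w hw => by
            rw [heilbronnSum_mul_one_sub_teich hp2 k (ne_of_mem_erase hw)]
    _ ≤ p + √(p * (M * (p * p))) := by
        refine add_le_add hzero (Real.le_sqrt_of_sq_le (sq_sum_le_card_mul_sum_sq.trans ?_))
        gcongr
    _ = p + p * √(M * p) := by
        rw [show (p * (M * (p * p)) : ℝ) = p ^ 2 * (M * p) by ring,
          Real.sqrt_mul (by positivity), Real.sqrt_sq (by positivity)]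

lemma card_level_truncLog_mul_le_of_pow_three_le {b : ℕ} (hb : 22 ≤ b) (hbp : b ^ 3 ≤ p)
    (r : ZMod p) :
    (#{x : ZMod p | x ≠ 0 ∧ x ≠ 1 ∧ (truncLog p).eval x = r} : ℝ) * b ≤ 4.1 * p := by
  set N := #{x : ZMod p | x ≠ 0 ∧ x ≠ 1 ∧ (truncLog p).eval x = r}
  have hbA : b ^ 2 ≤ p / b := (Nat.le_div_iff_mul_le (by lia)).2 (by rwa [← pow_succ])
  have hb2 : 22 * b ≤ b ^ 2 := by nlinarith
  have hstepanov : N * (b ^ 2 / 2) ≤ p * (b + b) := by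
    refine card_level_truncLog_mul_le (A := p / b) (Nat.div_mul_le_self p b)
      (by have := Nat.div_le_self p b; lia) ?_ (r := r) fun x hx => (mem_filter.mp hx).2
    calc b ^ 2 / 2 * (p / b + b + b + b ^ 2 / 2 + 1) < b ^ 2 / 2 * (2 * (p / b)) :=
          Nat.mul_lt_mul_of_pos_left (by lia) (by lia)
      _ ≤ b ^ 2 * (p / b) := by
          rw [← mul_assoc]
          gcongr
          lia
      _ = p / b * b * b := by ring
  have hN : (N : ℝ) * (b ^ 2 - 1) ≤ 4 * (p * b) := by
    have h : N * b ^ 2 ≤ 4 * (p * b) + N := by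
      have h2 : b ^ 2 ≤ 2 * (b ^ 2 / 2) + 1 := by lia
      nlinarith
    have : (N * b ^ 2 : ℝ) ≤ 4 * (p * b) + N := by exact_mod_cast h
    linarith
  have hb22 : (22 : ℝ) ≤ b := by exact_mod_cast hb
  have hb484 : (484 : ℝ) ≤ b ^ 2 := by nlinarith
  refine le_of_mul_le_mul_right ?_ (by linarith : (0 : ℝ) < b ^ 2 - 1)
  nlinarith

lemma exp_one_div_mul_log_pow_le {x : ℝ} (hx : 1 ≤ x) (n : ℕ) :
    (Real.exp 1 / n * Real.log x) ^ n ≤ x := by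
  rcases eq_or_ne n 0 with rfl | hn
  · simpa
  calc (Real.exp 1 / n * Real.log x) ^ n = (Real.exp 1 * (Real.log x / n)) ^ n := by ring
    _ ≤ Real.exp (Real.log x / n) ^ n := by
        gcongr
        · have := Real.log_nonneg hx
          positivity
        · exact Real.exp_one_mul_le_exp
    _ = x := by
        rw [← Real.exp_nat_mul, mul_div_cancel₀ _ (Nat.cast_ne_zero.mpr hn),
          Real.exp_log (by linarith)]

lemma le_of_ten_le_log_two_mul {x : ℝ} (hx : 0 < x) (h : 10 ≤ Real.log (2 * x)) :
    10648 ≤ x := by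
  have h10 : Real.exp 1 ^ 10 ≤ 2 * x := by
    rw [← Real.exp_nat_mul, ← Real.le_log_iff_exp_le (by positivity)]
    simpa using h
  have he : (2.718 : ℝ) ^ 10 ≤ Real.exp 1 ^ 10 := by
    gcongr
    linarith [Real.exp_one_gt_d9]
  have : (2 * 10648 : ℝ) ≤ 2.718 ^ 10 := by norm_num
  linarith

lemma log_two_mul_pow_four_le {x b : ℝ} (hx : 1 ≤ x) (hb : 10 ≤ b) (hxb : x ≤ (b + 1) ^ 3) :
    Real.log (2 * x) ^ 4 ≤ 1312 * b := by
  set T := Real.log (2 * x)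
  have hT : 0 ≤ T := Real.log_nonneg (by linarith)
  have hcube : (2.718 / 12 : ℝ) ^ 12 * (T ^ 4) ^ 3 ≤ 2 * (1.1 * b) ^ 3 := by
    calc (2.718 / 12 : ℝ) ^ 12 * (T ^ 4) ^ 3 = (2.718 / 12 * T) ^ 12 := by ring
      _ ≤ (Real.exp 1 / (12 : ℕ) * T) ^ 12 := by
          gcongr
          · linarith [Real.exp_one_gt_d9]
          · norm_num
      _ ≤ 2 * x := exp_one_div_mul_log_pow_le (by linarith) 12
      _ ≤ 2 * (b + 1) ^ 3 := by gcongr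
      _ ≤ 2 * (1.1 * b) ^ 3 := by
          gcongr
          linarith
  refine le_of_pow_le_pow_left₀ three_ne_zero (by positivity) ?_
  have : (0 : ℝ) < b ^ 3 := by positivity
  rw [mul_pow] at hcube ⊢
  norm_num at hcube ⊢
  nlinarith

lemma sq_mul_sqrt_div_mul_le {T b x : ℝ} (hb : 0 < b) (hx : 0 ≤ x) (hT : T ^ 4 ≤ 1312 * b) :
    T ^ 2 * √(4.1 * x / b * x) ≤ 74 * x := by
  refine le_of_pow_le_pow_left₀ two_ne_zero (by positivity) ?_
  calc (T ^ 2 * √(4.1 * x / b * x)) ^ 2 = T ^ 4 * (4.1 * x / b * x) := by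
        rw [mul_pow, Real.sq_sqrt (by positivity)]
        ring
    _ ≤ 1312 * b * (4.1 * x / b * x) := by gcongr
    _ = 1312 * 4.1 * x ^ 2 := by field_simp
    _ ≤ (74 * x) ^ 2 := by nlinarith

theorem log_mul_norm_heilbronnSum_le (hT : 10 ≤ Real.log (2 * p)) {k : ZMod (p ^ 2)}
    (hk : IsUnit k) : Real.log (2 * p) * ‖heilbronnSum p k‖ ≤ 9 * p := by
  have hp0 : (0 : ℝ) < p := mod_cast (Fact.out : p.Prime).pos
  have hp : (10648 : ℝ) ≤ p := le_of_ten_le_log_two_mul hp0 hT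
  have hpN : 10648 ≤ p := mod_cast hp
  set T := Real.log (2 * p)
  set b := Nat.nthRoot 3 p
  have hbp : b ^ 3 ≤ p := Nat.pow_nthRoot_le_iff.mpr (Or.inl three_ne_zero)
  have hpb : p < (b + 1) ^ 3 := Nat.lt_pow_nthRoot_add_one three_ne_zero p
  have hb : 22 ≤ b := by
    by_contra! h
    have : (b + 1) ^ 3 ≤ 22 ^ 3 := Nat.pow_le_pow_left (by lia) 3
    lia
  have hbR : (22 : ℝ) ≤ b := mod_cast hb
  have hb0 : (0 : ℝ) < b := by linarith
  have hT4 : T ^ 4 ≤ 1312 * b :=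
    log_two_mul_pow_four_le (by linarith) (by linarith) (by exact_mod_cast hpb.le)
  have hH := norm_sq_heilbronnSum_le (by lia) (M := 4.1 * p / b)
    (fun r => (le_div_iff₀ hb0).mpr (card_level_truncLog_mul_le_of_pow_three_le hb hbp r)) hk
  have hdiag : T ^ 2 ≤ p := by
    have : 484 * (b : ℝ) ≤ p := by
      calc 484 * (b : ℝ) ≤ b ^ 2 * b := by
            gcongr
            nlinarith
        _ = b ^ 3 := by ring
        _ ≤ p := mod_cast hbp
    exact le_of_pow_le_pow_left₀ two_ne_zero hp0.le (by nlinarith)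
  have hoff : T ^ 2 * √(4.1 * p / b * p) ≤ 74 * (p : ℝ) :=
    sq_mul_sqrt_div_mul_le hb0 hp0.le hT4
  refine le_of_pow_le_pow_left₀ two_ne_zero (by positivity) ?_
  calc (T * ‖heilbronnSum p k‖) ^ 2 = T ^ 2 * ‖heilbronnSum p k‖ ^ 2 := mul_pow _ _ _
    _ ≤ T ^ 2 * (p + p * √(4.1 * p / b * p)) := by gcongr
    _ = p * T ^ 2 + p * (T ^ 2 * √(4.1 * p / b * p)) := by ring
    _ ≤ p * p + p * (74 * p) := by gcongr
    _ ≤ (9 * (p : ℝ)) ^ 2 := by nlinarith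

end Heilbronn

/-! ### Bézout's bound for nondegenerate zeros -/

section Bezout

open MvPolynomial

variable {ι R F : Type*} [Fintype ι] [CommRing R] [Field F]

/-- The Jacobian matrix `(∂f_i/∂X_j)(z)`. -/
def jacobianAt (f : ι → MvPolynomial ι R) (z : ι → R) : Matrix ι ι R :=
  Matrix.of fun i j => eval z (pderiv j (f i))

/-- Substitution of the line `t ↦ z + t L`, whose direction `L` is itself polynomial. -/
def lineSub (z : ι → R) (L : ι → MvPolynomial ι R) :
    MvPolynomial ι R →ₐ[R] Polynomial (MvPolynomial ι R) :=
  aeval fun j => Polynomial.C (C (z j)) + Polynomial.X * Polynomial.C (L j)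

omit [Fintype ι] in
lemma lineSub_X (z : ι → R) (L : ι → MvPolynomial ι R) (i : ι) :
    lineSub z L (X i) = Polynomial.C (C (z i)) + Polynomial.X * Polynomial.C (L i) :=
  aeval_X _ _

omit [Fintype ι] in
lemma coeff_zero_lineSub (z : ι → R) (L : ι → MvPolynomial ι R) (f : MvPolynomial ι R) :
    (lineSub z L f).coeff 0 = C (eval z f) := by
  induction f using MvPolynomial.induction_on with
  | C a => simp
  | add f g hf hg => simp [hf, hg]
  | mul_X f i hf => simp [Polynomial.mul_coeff_zero, hf, lineSub_X]

lemma coeff_one_lineSub (z : ι → R) (L : ι → MvPolynomial ι R) (f : MvPolynomial ι R) :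
    (lineSub z L f).coeff 1 = ∑ j, C (eval z (pderiv j f)) * L j := by
  classical
  induction f using MvPolynomial.induction_on with
  | C a => simp
  | add f g hf hg => simp [hf, hg, add_mul, sum_add_distrib]
  | mul_X f i hf =>
    have hX : (lineSub z L (X i)).coeff 1 = L i := by
      simp [lineSub_X, Polynomial.coeff_C]
    rw [map_mul, Polynomial.mul_coeff_one, hf, hX, coeff_zero_lineSub, coeff_zero_lineSub]
    simp only [Derivation.leibniz, smul_eq_mul, map_add, map_mul, pderiv_X, eval_X, add_mul,
      sum_add_distrib]
    congr 1
    · rw [sum_eq_single i (by simp +contextual [eq_comm]) (by simp)]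
      simp
    · rw [sum_mul]
      exact sum_congr rfl fun j _ => by ring

/- The direction is the inverse Jacobian applied to the variables: along this line `f i` vanishes
to first order with leading coefficient `X i`. -/
lemma exists_lineSub_eq_X_mul [DecidableEq ι] {f : ι → MvPolynomial ι R} {z : ι → R}
    (hz : ∀ i, eval z (f i) = 0) (hJ : IsUnit (jacobianAt f z)) :
    ∃ (L : ι → MvPolynomial ι R) (h : ι → Polynomial (MvPolynomial ι R)),
      ∀ i, lineSub z L (f i) = Polynomial.X * h i ∧ (h i).coeff 0 = X i := by
  set J := jacobianAt f z
  have hJJ : J * J⁻¹ = 1 := Matrix.mul_nonsing_inv J ((Matrix.isUnit_iff_isUnit_det J).mp hJ)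
  let L : ι → MvPolynomial ι R := fun j => ∑ k, C (J⁻¹ j k) * X k
  have hL : ∀ i, (lineSub z L (f i)).coeff 1 = X i := by
    intro i
    calc (lineSub z L (f i)).coeff 1 = ∑ j, ∑ k, C (J i j) * (C (J⁻¹ j k) * X k) := by
          rw [coeff_one_lineSub]
          exact sum_congr rfl fun j _ => mul_sum _ _ _
      _ = ∑ k, C ((J * J⁻¹) i k) * X k := by
          rw [sum_comm]
          simp only [Matrix.mul_apply, map_sum, map_mul, sum_mul, mul_assoc]
      _ = X i := by simp [hJJ, Matrix.one_apply]
  have hdvd : ∀ i, Polynomial.X ∣ lineSub z L (f i) := fun i =>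
    Polynomial.X_dvd_iff.mpr (by rw [coeff_zero_lineSub, hz, map_zero])
  choose h hh using hdvd
  exact ⟨L, h, fun i => ⟨hh i, by rw [← hL i, hh i, Polynomial.coeff_X_mul]⟩⟩

lemma coeff_lineSub_mul_prod_pow {f : ι → MvPolynomial ι R} {z : ι → R}
    {L : ι → MvPolynomial ι R} {h : ι → Polynomial (MvPolynomial ι R)}
    (hL : ∀ i, lineSub z L (f i) = Polynomial.X * h i ∧ (h i).coeff 0 = X i)
    (g : MvPolynomial ι R) {a : ι →₀ ℕ} {m : ℕ} (hm : m ≤ a.degree) :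
    (lineSub z L (g * ∏ i, f i ^ a i)).coeff m =
      if a.degree = m then monomial a (eval z g) else 0 := by
  have hfactor : lineSub z L (g * ∏ i, f i ^ a i) =
      Polynomial.X ^ a.degree * (lineSub z L g * ∏ i, h i ^ a i) := by
    simp only [map_mul, map_prod, map_pow, hL, mul_pow, prod_mul_distrib, prod_pow_eq_pow_sum,
      Finsupp.degree_eq_sum]
    ring
  rw [hfactor, Polynomial.coeff_X_pow_mul']
  split_ifs with h1 h2 h2
  · have hcoeff : (∏ i, h i ^ a i).coeff 0 = ∏ i, X i ^ a i := by
      simp only [Polynomial.coeff_zero_eq_eval_zero, Polynomial.eval_prod, Polynomial.eval_pow]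
      exact prod_congr rfl fun i _ => by rw [← Polynomial.coeff_zero_eq_eval_zero, (hL i).2]
    rw [h2, Nat.sub_self, Polynomial.mul_coeff_zero, coeff_zero_lineSub, hcoeff, monomial_eq,
      Finsupp.prod_fintype _ _ (by simp)]
  · lia
  · lia
  · rfl

theorem linearIndependent_indicator_mul_prod_pow [DecidableEq ι] [Fintype F]
    {f : ι → MvPolynomial ι F} {Z : Finset (ι → F)} (hzero : ∀ z ∈ Z, ∀ i, eval z (f i) = 0)
    (hJ : ∀ z ∈ Z, IsUnit (jacobianAt f z)) :
    LinearIndependent F fun x : Z × (ι →₀ ℕ) => indicator x.1.1 * ∏ i, f i ^ x.2 i := by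
  classical
  rw [linearIndependent_iff']
  intro s c hc
  by_contra! hne
  obtain ⟨x₀, hx₀, hmin⟩ := exists_min_image {x ∈ s | c x ≠ 0} (fun x => x.2.degree)
    (let ⟨x, hx, hcx⟩ := hne; ⟨x, mem_filter.mpr ⟨hx, hcx⟩⟩)
  rw [mem_filter] at hx₀
  obtain ⟨L, h, hL⟩ := exists_lineSub_eq_X_mul (hzero _ x₀.1.2) (hJ _ x₀.1.2)
  have hterm : ∀ x ∈ s, x ≠ x₀ →
      c x * coeff x₀.2 ((lineSub x₀.1.1 L (indicator x.1.1 * ∏ i, f i ^ x.2 i)).coeff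
        x₀.2.degree) = 0 := by
    intro x hx hxx
    rcases eq_or_ne (c x) 0 with hcx | hcx
    · rw [hcx, zero_mul]
    rw [coeff_lineSub_mul_prod_pow hL _ (hmin x (mem_filter.mpr ⟨hx, hcx⟩))]
    by_cases hx1 : x.1 = x₀.1
    · have hx2 : x.2 ≠ x₀.2 := fun hx2 => hxx (Prod.ext hx1 hx2)
      split_ifs <;> simp [coeff_monomial, hx2]
    · rw [eval_indicator_apply_eq_zero _ _ fun h => hx1 (Subtype.ext h.symm)]
      simp
  have hcoeff := congrArg (fun q => coeff x₀.2 ((lineSub x₀.1.1 L q).coeff x₀.2.degree)) hc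
  simp only [map_sum, map_smul, Polynomial.finsetSum_coeff, Polynomial.coeff_smul, coeff_sum,
    coeff_smul, smul_eq_mul, map_zero, Polynomial.coeff_zero, coeff_zero] at hcoeff
  rw [sum_eq_single_of_mem x₀ hx₀.1 hterm, coeff_lineSub_mul_prod_pow hL _ le_rfl, if_pos rfl,
    coeff_monomial, if_pos rfl, eval_indicator_apply_eq_one, mul_one] at hcoeff
  exact hx₀.2 hcoeff

lemma finrank_restrictDegree (m : ℕ) :
    Module.finrank F (restrictDegree ι F m) = (m + 1) ^ Fintype.card ι := by
  have e : {n : ι →₀ ℕ | ∀ i, n i ≤ m} ≃ (ι → {b : ℕ // b ≤ m}) :=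
    (Finsupp.equivFunOnFinite.subtypeEquiv (q := fun g => ∀ i, g i ≤ m) fun _ => Iff.rfl).trans
      (Equiv.subtypePiEquivPi (p := fun _ b => b ≤ m))
  have hcard : Nat.card {b : ℕ // b ≤ m} = m + 1 := by
    rw [← Nat.card_fin (m + 1)]
    exact Nat.card_congr ⟨fun b => ⟨b, by lia⟩, fun b => ⟨b, by lia⟩, fun _ => rfl, fun _ => rfl⟩
  rw [restrictDegree, Module.finrank_eq_nat_card_basis (basisRestrictSupport F _),
    Nat.card_congr e, Nat.card_fun, hcard, Nat.card_eq_fintype_card]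

omit [Fintype ι] in
lemma mem_restrictDegree_iff_degreeOf_le (f : MvPolynomial ι R) (m : ℕ) :
    f ∈ restrictDegree ι R m ↔ ∀ i, f.degreeOf i ≤ m := by
  simp only [mem_restrictDegree, degreeOf_le_iff]
  exact ⟨fun h i s hs => h s hs i, fun h s hs i => h i s hs⟩

lemma card_zeros_mul_pow_le [DecidableEq ι] [Fintype F] {f : ι → MvPolynomial ι F}
    {Z : Finset (ι → F)} (hzero : ∀ z ∈ Z, ∀ i, eval z (f i) = 0)
    (hJ : ∀ z ∈ Z, IsUnit (jacobianAt f z)) {B : ℕ} (hB : ∀ j, ∑ i, (f i).degreeOf j ≤ B)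
    (A : ℕ) :
    #Z * A ^ Fintype.card ι ≤ (Fintype.card F + A * B + 1) ^ Fintype.card ι := by
  set D := Fintype.card F + A * B
  let e : (ι → Fin A) → ι →₀ ℕ := fun a => Finsupp.equivFunOnFinite.symm fun i => a i
  have he : Function.Injective e := fun a b hab =>
    funext fun i => Fin.ext (DFunLike.congr_fun hab i)
  have hli := (linearIndependent_indicator_mul_prod_pow hzero hJ).comp (Prod.map id e)
    (Function.injective_id.prodMap he)
  have hmem : ∀ x : Z × (ι → Fin A),
      indicator x.1.1 * ∏ i, f i ^ (x.2 i : ℕ) ∈ restrictDegree ι F D := by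
    intro x
    rw [mem_restrictDegree_iff_degreeOf_le]
    intro j
    refine (degreeOf_mul_le _ _ _).trans (add_le_add ?_ ?_)
    · exact ((mem_restrictDegree_iff_degreeOf_le _ _).mp
        (indicator_mem_restrictDegree x.1.1) j).trans (Nat.sub_le _ _)
    · calc (∏ i, f i ^ (x.2 i : ℕ)).degreeOf j ≤ ∑ i, (x.2 i : ℕ) * (f i).degreeOf j :=
            (degreeOf_prod_le _ _ _).trans (sum_le_sum fun i _ => degreeOf_pow_le _ _ _)
        _ ≤ ∑ i, A * (f i).degreeOf j := by
            gcongr with i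
            exact (x.2 i).2.le
        _ ≤ A * B := by
            rw [← mul_sum]
            gcongr
            exact hB j
  have hli' : LinearIndependent F fun x : Z × (ι → Fin A) =>
      (⟨_, hmem x⟩ : restrictDegree ι F D) :=
    LinearIndependent.of_comp (restrictDegree ι F D).subtype hli
  simpa [finrank_restrictDegree] using hli'.fintype_card_le_finrank

/- Let `A → ∞` in `card_zeros_mul_pow_le`. -/
theorem card_zeros_le_of_isUnit_jacobianAt [DecidableEq ι] [Finite F]
    {f : ι → MvPolynomial ι F} {Z : Finset (ι → F)} (hzero : ∀ z ∈ Z, ∀ i, eval z (f i) = 0)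
    (hJ : ∀ z ∈ Z, IsUnit (jacobianAt f z)) {B : ℕ} (hB : ∀ j, ∑ i, (f i).degreeOf j ≤ B) :
    #Z ≤ B ^ Fintype.card ι := by
  have := Fintype.ofFinite F
  set n := Fintype.card ι
  set K : ℝ := Fintype.card F + 1
  have hbound : ∀ A : ℕ, 1 ≤ A → (#Z : ℝ) ≤ (K * (1 / A) + B) ^ n := by
    intro A hA
    have : (0 : ℝ) < A := by exact_mod_cast hA
    have h : (#Z * A ^ n : ℝ) ≤ (Fintype.card F + A * B + 1) ^ n := by
      exact_mod_cast card_zeros_mul_pow_le hzero hJ hB A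
    calc (#Z : ℝ) ≤ (Fintype.card F + A * B + 1) ^ n / A ^ n :=
          (le_div_iff₀ (by positivity)).mpr h
      _ = (K * (1 / A) + B) ^ n := by
          rw [← div_pow]
          congr 1
          field_simp
          ring
  have hlim : Filter.Tendsto (fun A : ℕ => (K * (1 / (A : ℝ)) + B) ^ n) Filter.atTop
      (nhds ((K * 0 + B) ^ n)) :=
    ((tendsto_one_div_atTop_nhds_zero_nat.const_mul K).add_const (B : ℝ)).pow n
  have hle := ge_of_tendsto hlim (Filter.eventually_atTop.mpr ⟨1, hbound⟩)
  rw [mul_zero, zero_add] at hle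
  exact_mod_cast hle

end Bezout

/-! ### Power-sum systems over a finite field -/

section PowerSums

open MvPolynomial

variable {F κ : Type*} [Field F] [Fintype κ]

/-- The tangent direction `(1, v^{j+1})_{j ∈ J}` of the curve `v ↦ (v⁻¹, v^j)_{j ∈ J}`, up to
nonzero factors in each coordinate; the index `none` stands for the exponent `-1`. -/
def tangentVec (J : Finset ℕ) (v : F) : Option J → F
  | none => 1
  | some j => v ^ (j.1 + 1)

/-- The power sums of a tuple with exponents `-1` (index `none`) and `j ∈ J`. -/
def powerSums (J : Finset ℕ) (x : κ → F) : Option J → F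
  | none => ∑ i, (x i)⁻¹
  | some j => ∑ i, x i ^ j.1

/-- The polynomial system `powerSums J z = s` in `#J + 1` unknowns, the equation with exponent `-1`
being multiplied by the product of the unknowns. -/
def powerSumSystem (J : Finset ℕ) (s : Option J → F) : Option J → MvPolynomial (Option J) F
  | none => (∑ i, ∏ l ∈ univ.erase i, X l) - C (s none) * ∏ l, X l
  | some j => (∑ i, X i ^ j.1) - C (s (some j))

variable {J : Finset ℕ}

lemma powerSums_eq_add_of_injective {ι : Type*} [Fintype ι] {σ : ι → κ}
    (hσ : Function.Injective σ) (x : κ → F) [Fintype {i // i ∉ Set.range σ}] :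
    powerSums J x = powerSums J (x ∘ σ) + powerSums J fun i : {i // i ∉ Set.range σ} => x i := by
  classical
  have hsum : ∀ g : F → F, ∑ i, g (x i) =
      ∑ i, g (x (σ i)) + ∑ i : {i // i ∉ Set.range σ}, g (x i) := by
    intro g
    rw [← Fintype.sum_subtype_add_sum_subtype (· ∈ Set.range σ)]
    congr 1
    · convert (Fintype.sum_equiv (Equiv.ofInjective σ hσ) (fun i => g (x (σ i)))
        (fun i => g (x i.1)) fun _ => rfl).symm
    · congr!
  funext e
  cases e with
  | none => exact hsum (·⁻¹)
  | some j => exact hsum (· ^ j.1)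

lemma eval_powerSumSystem_eq_zero {z s : Option J → F} (hz : ∀ i, z i ≠ 0)
    (hs : powerSums J z = s) (e : Option J) : eval z (powerSumSystem J s e) = 0 := by
  subst hs
  cases e with
  | none =>
    simp only [powerSumSystem, powerSums, map_sub, map_sum, map_mul, map_prod, eval_X, eval_C,
      sum_mul, sub_eq_zero]
    refine sum_congr rfl fun i _ => ?_
    rw [← mul_prod_erase univ z (mem_univ i), inv_mul_cancel_left₀ (hz i)]
  | some j => simp [powerSumSystem, powerSums]

lemma pderiv_prod_X {σ R : Type*} [CommRing R] [DecidableEq σ] (k : σ) (S : Finset σ) :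
    pderiv k (∏ l ∈ S, (X l : MvPolynomial σ R)) =
      if k ∈ S then ∏ l ∈ S.erase k, X l else 0 := by
  have hzero : ∀ T : Finset σ, k ∉ T → pderiv k (∏ l ∈ T, (X l : MvPolynomial σ R)) = 0 :=
    fun T hT => prod_induction _ (fun f => pderiv k f = 0)
      (fun f g hf hg => by rw [Derivation.leibniz, hf, hg, smul_zero, smul_zero, add_zero])
      (Derivation.map_one_eq_zero (pderiv k)) fun l hl => pderiv_X_of_ne fun h => hT (h ▸ hl)
  split_ifs with hk
  · rw [← mul_prod_erase S _ hk, Derivation.leibniz, hzero _ (notMem_erase k S)]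
    simp
  · exact hzero S hk

lemma degreeOf_prod_X_le {σ R : Type*} [CommRing R] [Nontrivial R] (k : σ) (S : Finset σ) :
    (∏ l ∈ S, (X l : MvPolynomial σ R)).degreeOf k ≤ 1 := by
  classical
  refine (degreeOf_prod_le _ _ _).trans ?_
  simp only [degreeOf_X, sum_ite_eq]
  split_ifs <;> simp

lemma sum_degreeOf_powerSumSystem_le (J : Finset ℕ) (s : Option J → F) (k : Option J) :
    ∑ e, (powerSumSystem J s e).degreeOf k ≤ 1 + ∑ j ∈ J, j := by
  classical
  rw [Fintype.sum_option, ← sum_coe_sort J fun j => j]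
  refine add_le_add ?_ (sum_le_sum fun j _ => ?_)
  · refine (degreeOf_sub_le _ _ _).trans (max_le ?_ ?_)
    · exact (degreeOf_sum_le _ _ _).trans (Finset.sup_le fun i _ => degreeOf_prod_X_le _ _)
    · exact (degreeOf_C_mul_le _ _ _).trans (degreeOf_prod_X_le _ _)
  · refine (degreeOf_sub_le _ _ _).trans (max_le ?_ (by simp))
    refine (degreeOf_sum_le _ _ _).trans (Finset.sup_le fun i _ => ?_)
    refine (degreeOf_pow_le _ _ _).trans ?_
    rw [degreeOf_X]
    split_ifs <;> simp

lemma eval_pderiv_powerSumSystem_none {z : Option J → F} (hz : ∀ i, z i ≠ 0) (k : Option J) :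
    eval z (pderiv k (powerSumSystem J (powerSums J z) none)) = -(∏ i, z i) * (z k ^ 2)⁻¹ := by
  classical
  set P := ∏ i, z i
  have herase : ∀ i, ∏ l ∈ univ.erase i, z l = P * (z i)⁻¹ := by
    intro i
    rw [eq_mul_inv_iff_mul_eq₀ (hz i), mul_comm, mul_prod_erase _ _ (mem_univ i)]
  have hterm : ∀ i, eval z (pderiv k (∏ l ∈ univ.erase i, (X l : MvPolynomial (Option J) F))) =
      P * (z k)⁻¹ * (z i)⁻¹ - if i = k then P * (z k ^ 2)⁻¹ else 0 := by
    intro i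
    rw [pderiv_prod_X]
    rcases eq_or_ne i k with rfl | hik
    · rw [if_neg (notMem_erase i univ), map_zero, if_pos rfl, sq, mul_inv, mul_assoc, sub_self]
    · have hk : k ∈ univ.erase i := mem_erase.mpr ⟨hik.symm, mem_univ _⟩
      rw [if_pos hk, if_neg hik, sub_zero, map_prod]
      simp only [eval_X]
      rw [mul_right_comm, ← herase, eq_mul_inv_iff_mul_eq₀ (hz k), mul_comm, mul_prod_erase _ _ hk]
  have hprod : eval z (pderiv k (∏ l, (X l : MvPolynomial (Option J) F))) = P * (z k)⁻¹ := by
    rw [pderiv_prod_X, if_pos (mem_univ k), map_prod]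
    simpa using herase k
  have hsum : powerSums J z none = ∑ i, (z i)⁻¹ := rfl
  rw [powerSumSystem, map_sub, map_sub, pderiv_C_mul, map_mul, eval_C, hprod,
    hsum, map_sum, map_sum]
  simp only [hterm, sum_sub_distrib, sum_ite_eq', mem_univ, if_true, ← mul_sum]
  ring

lemma eval_pderiv_powerSumSystem_some {z : Option J → F} (hz : ∀ i, z i ≠ 0) (s : Option J → F)
    (j : J) (k : Option J) :
    eval z (pderiv k (powerSumSystem J s (some j))) = j.1 * z k ^ (j.1 + 1) * (z k ^ 2)⁻¹ := by
  classical
  simp only [powerSumSystem, map_sub, map_sum, pderiv_C, sub_zero, Derivation.leibniz_pow]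
  rw [sum_eq_single k (by simp +contextual [pderiv_X]) (by simp)]
  rcases j with ⟨_ | j, hj⟩
  · simp
  · have := hz k
    simp
    field_simp
    ring

lemma isUnit_jacobianAt_powerSumSystem (hJ : ∀ j ∈ J, (j : F) ≠ 0) {z : Option J → F}
    (hz : ∀ i, z i ≠ 0) (hli : LinearIndependent F fun i => tangentVec J (z i)) :
    IsUnit (jacobianAt (powerSumSystem J (powerSums J z)) z) := by
  classical
  let a : Option J → F
    | none => -∏ i, z i
    | some j => j.1
  have ha : ∀ e, a e ≠ 0
    | none => neg_ne_zero.mpr (prod_ne_zero_iff.mpr fun i _ => hz i)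
    | some j => hJ j.1 j.2
  have hfactor : jacobianAt (powerSumSystem J (powerSums J z)) z = Matrix.diagonal a *
      (Matrix.of fun i => tangentVec J (z i)).transpose *
        Matrix.diagonal fun k => (z k ^ 2)⁻¹ := by
    ext e k
    rw [Matrix.mul_diagonal, Matrix.diagonal_mul, Matrix.transpose_apply, Matrix.of_apply,
      jacobianAt, Matrix.of_apply]
    cases e with
    | none => rw [eval_pderiv_powerSumSystem_none hz, tangentVec, mul_one]
    | some j => rw [eval_pderiv_powerSumSystem_some hz, tangentVec]
  rw [hfactor]
  have hT : IsUnit (Matrix.of fun i => tangentVec J (z i)).transpose := by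
    rw [Matrix.isUnit_transpose]
    exact Matrix.linearIndependent_rows_iff_isUnit.mp hli
  refine (IsUnit.mul ?_ hT).mul ?_
  · exact Matrix.isUnit_diagonal.mpr (Pi.isUnit_iff.mpr fun e => (ha e).isUnit)
  · exact Matrix.isUnit_diagonal.mpr
      (Pi.isUnit_iff.mpr fun k => (inv_ne_zero (pow_ne_zero 2 (hz k))).isUnit)

open Classical in
lemma card_powerSums_eq_le [Fintype F] [DecidableEq F] (hJ : ∀ j ∈ J, (j : F) ≠ 0)
    (s : Option J → F) :
    #{z : Option J → Fˣ | LinearIndependent F (fun i => tangentVec J (z i : F)) ∧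
      powerSums J (fun i => (z i : F)) = s} ≤ (1 + ∑ j ∈ J, j) ^ (#J + 1) := by
  set Z : Finset (Option J → Fˣ) := {z | LinearIndependent F (fun i => tangentVec J (z i : F)) ∧
      powerSums J (fun i => (z i : F)) = s}
  let val : (Option J → Fˣ) → Option J → F := fun z i => z i
  have hinj : Function.Injective val := fun z z' h => funext fun i => Units.ext (congrFun h i)
  rw [← card_image_of_injective Z hinj]
  have hmem : ∀ z ∈ Z.image val, (∀ i, z i ≠ 0) ∧
      LinearIndependent F (fun i => tangentVec J (z i)) ∧ powerSums J z = s := by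
    intro z hz
    obtain ⟨u, hu, rfl⟩ := mem_image.mp hz
    exact ⟨fun i => (u i).ne_zero, (mem_filter.mp hu).2⟩
  refine (card_zeros_le_of_isUnit_jacobianAt (f := powerSumSystem J s) (fun z hz => ?_)
    (fun z hz => ?_) (sum_degreeOf_powerSumSystem_le J s)).trans_eq (by simp)
  · exact eval_powerSumSystem_eq_zero (hmem z hz).1 (hmem z hz).2.2
  · obtain ⟨h0, hli, rfl⟩ := hmem z hz
    exact isUnit_jacobianAt_powerSumSystem hJ h0 hli

open Classical in
lemma card_powerSums_eq_of_linearIndependent_le [Fintype F] [DecidableEq F] [DecidableEq κ]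
    (hJ : ∀ j ∈ J, (j : F) ≠ 0)
    (s : Option J → F) (σ : Option J → κ) :
    #{x : κ → Fˣ | LinearIndependent F (fun i => tangentVec J (x (σ i) : F)) ∧
      powerSums J (fun i => (x i : F)) = s} ≤
      (1 + ∑ j ∈ J, j) ^ (#J + 1) * Fintype.card Fˣ ^ (Fintype.card κ - (#J + 1)) := by
  by_cases hσ : Function.Injective σ
  swap
  · rw [filter_eq_empty_iff.mpr, card_empty]
    · exact Nat.zero_le _
    · exact fun x _ hx => hσ fun a b hab => hx.1.injective (by simp only [hab])
  have hcard : Fintype.card ({i // i ∉ Set.range σ} → Fˣ) =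
      Fintype.card Fˣ ^ (Fintype.card κ - (#J + 1)) := by
    rw [Fintype.card_fun, Fintype.card_subtype_compl,
      ← Fintype.card_congr (Equiv.ofInjective σ hσ)]
    simp
  rw [← hcard, ← card_univ]
  refine card_le_mul_card_image_of_maps_to (f := fun x i => x i.1) (fun _ _ => mem_univ _) _
    fun y _ => ?_
  refine le_trans ?_ (card_powerSums_eq_le hJ (s - powerSums J fun i => (y i : F)))
  refine card_le_card_of_injOn (· ∘ σ) (fun x hx => ?_) fun x hx x' hx' hxx' => funext fun i => ?_
  · obtain ⟨⟨-, hli, rfl⟩, rfl⟩ := by simpa only [coe_filter, mem_filter] using hx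
    refine mem_filter.mpr ⟨mem_univ _, hli, ?_⟩
    rw [eq_sub_iff_add_eq, powerSums_eq_add_of_injective hσ]
    rfl
  · by_cases hi : i ∈ Set.range σ
    · obtain ⟨k, rfl⟩ := hi
      exact congrFun hxx' k
    · exact congrFun ((mem_filter.mp hx).2.trans (mem_filter.mp hx').2.symm) ⟨i, hi⟩

/-- The tangent directions at the entries of `x` span the whole space. -/
def TangentsSpan (J : Finset ℕ) (x : κ → Fˣ) : Prop :=
  Submodule.span F (Set.range fun i => tangentVec J (x i : F)) = ⊤

omit [Fintype κ] in
lemma exists_linearIndependent_comp_of_span_eq_top {ι : Type*} [Finite ι] {v : κ → ι → F}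
    (h : Submodule.span F (Set.range v) = ⊤) : ∃ σ : ι → κ, LinearIndependent F (v ∘ σ) := by
  obtain ⟨τ, a, -, hspan, hli⟩ := exists_linearIndependent' F v
  let e := (Pi.basisFun F ι).indexEquiv (Module.Basis.mk hli (hspan.trans h).ge)
  exact ⟨a ∘ e, hli.comp e e.injective⟩

open Classical in
lemma card_powerSums_eq_of_tangentsSpan_le [Fintype F] [DecidableEq F] [DecidableEq κ]
    (hJ : ∀ j ∈ J, (j : F) ≠ 0)
    (s : Option J → F) :
    #{x : κ → Fˣ | TangentsSpan J x ∧ powerSums J (fun i => (x i : F)) = s} ≤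
      Fintype.card κ ^ (#J + 1) * ((1 + ∑ j ∈ J, j) ^ (#J + 1) *
        Fintype.card Fˣ ^ (Fintype.card κ - (#J + 1))) := by
  have hsub : ({x : κ → Fˣ | TangentsSpan J x ∧ powerSums J (fun i => (x i : F)) = s} : Finset _) ⊆
      (univ : Finset (Option J → κ)).biUnion fun σ =>
        {x | LinearIndependent F (fun i => tangentVec J (x (σ i) : F)) ∧
          powerSums J (fun i => (x i : F)) = s} := by
    intro x hx
    obtain ⟨hspan, hs⟩ := (mem_filter.mp hx).2
    obtain ⟨σ, hσ⟩ := exists_linearIndependent_comp_of_span_eq_top hspan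
    exact mem_biUnion.mpr ⟨σ, mem_univ _, mem_filter.mpr ⟨mem_univ _, hσ, hs⟩⟩
  refine (card_le_card hsub).trans ((card_biUnion_le_card_mul _ _ _ fun σ _ =>
    card_powerSums_eq_of_linearIndependent_le hJ s σ).trans_eq ?_)
  simp

lemma card_dotProduct_tangentVec_eq_zero_le [Fintype F] [DecidableEq F] {w : ℕ}
    (hJ : ∀ j ∈ J, j + 1 ≤ w) {l : Option J → F} (hl : l ≠ 0) :
    #{u : Fˣ | l ⬝ᵥ tangentVec J (u : F) = 0} ≤ w := by
  let q : Polynomial F :=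
    Polynomial.C (l none) + ∑ j : J, Polynomial.C (l (some j)) * Polynomial.X ^ (j.1 + 1)
  have hcoeff_some : ∀ j : J, q.coeff (j.1 + 1) = l (some j) := fun j => by
    simp [q, Polynomial.coeff_X_pow]
  have hcoeff_none : q.coeff 0 = l none := by simp [q]
  have hq : q ≠ 0 := by
    refine fun h0 => hl (funext fun e => ?_)
    cases e with
    | none => rw [← hcoeff_none, h0, Polynomial.coeff_zero, Pi.zero_apply]
    | some j => rw [← hcoeff_some, h0, Polynomial.coeff_zero, Pi.zero_apply]
  have hdeg : q.natDegree ≤ w := by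
    refine (Polynomial.natDegree_add_le _ _).trans (max_le (by simp) ?_)
    exact Polynomial.natDegree_sum_le_of_forall_le _ _ fun j _ =>
      (Polynomial.natDegree_C_mul_X_pow_le _ _).trans (hJ j.1 j.2)
  calc #{u : Fˣ | l ⬝ᵥ tangentVec J (u : F) = 0} ≤ #q.roots.toFinset := by
        refine card_le_card_of_injOn (fun u : Fˣ => (u : F)) (fun u hu => ?_)
          Units.val_injective.injOn
        have hu' : l ⬝ᵥ tangentVec J (u : F) = 0 := (mem_filter.mp hu).2
        rw [mem_coe, Multiset.mem_toFinset, Polynomial.mem_roots hq, Polynomial.IsRoot.def, ← hu']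
        simp [q, tangentVec, dotProduct, Fintype.sum_option, Polynomial.eval_finsetSum]
    _ ≤ Multiset.card q.roots := Multiset.toFinset_card_le _
    _ ≤ w := q.card_roots'.trans hdeg

omit [Fintype κ] in
lemma exists_ne_zero_dotProduct_eq_zero_of_span_ne_top {ι : Type*} [Fintype ι] {v : κ → ι → F}
    (h : Submodule.span F (Set.range v) ≠ ⊤) : ∃ l ≠ 0, ∀ i, l ⬝ᵥ v i = 0 := by
  classical
  obtain ⟨f, hf0, hf⟩ := Submodule.exists_le_ker_of_lt_top _ h.lt_top
  obtain ⟨l, rfl⟩ := (dotProductEquiv F ι).surjective f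
  exact ⟨l, fun hl => hf0 (by rw [hl, map_zero]), fun i => hf (Submodule.subset_span ⟨i, rfl⟩)⟩

open Classical in
lemma card_not_tangentsSpan_le [Fintype F] [DecidableEq F] [DecidableEq κ] {w : ℕ}
    (hJ : ∀ j ∈ J, j + 1 ≤ w) :
    #{x : κ → Fˣ | ¬ TangentsSpan J x} ≤ Fintype.card F ^ (#J + 1) * w ^ Fintype.card κ := by
  have hsub : ({x : κ → Fˣ | ¬ TangentsSpan J x} : Finset _) ⊆
      ({l | l ≠ 0} : Finset (Option J → F)).biUnion fun l =>
        Fintype.piFinset fun _ => {u : Fˣ | l ⬝ᵥ tangentVec J (u : F) = 0} := by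
    intro x hx
    obtain ⟨l, hl0, hl⟩ := exists_ne_zero_dotProduct_eq_zero_of_span_ne_top (mem_filter.mp hx).2
    refine mem_biUnion.mpr ⟨l, mem_filter.mpr ⟨mem_univ _, hl0⟩, ?_⟩
    exact Fintype.mem_piFinset.mpr fun i => mem_filter.mpr ⟨mem_univ _, hl i⟩
  refine (card_le_card hsub).trans ((card_biUnion_le_card_mul _ _ (w ^ Fintype.card κ)
    fun l hl => ?_).trans ?_)
  · rw [Fintype.card_piFinset, prod_const, card_univ]
    exact Nat.pow_le_pow_left
      (card_dotProduct_tangentVec_eq_zero_le hJ (mem_filter.mp hl).2) _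
  · gcongr
    exact (card_filter_le _ _).trans_eq (by simp)

end PowerSums

/-! ### Character sums along a multiplicative curve -/

section BilinearSums

variable {R : Type*} [CommRing R] [Fintype R] [DecidableEq R] {χ : AddChar R ℂ}

lemma sum_norm_sum_addChar_mul_le {X : Type*} (hχ : χ.IsPrimitive) (s : Finset X) (A : X → R)
    {M : ℝ} (hM : ∀ v, (#{x ∈ s | A x = v} : ℝ) ≤ M) :
    ∑ y ∈ s, ‖∑ x ∈ s, χ (A x * A y)‖ ≤ #s * M * √(Fintype.card R) := by
  have hM0 : 0 ≤ M := (Nat.cast_nonneg _).trans (hM 0)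
  have hfiber : ∑ y ∈ s, ‖∑ x ∈ s, χ (A x * A y)‖ ^ 2 ≤ M * ∑ v, ‖∑ x ∈ s, χ (A x * v)‖ ^ 2 := by
    rw [← sum_fiberwise s A, mul_sum]
    refine sum_le_sum fun v _ => ?_
    rw [sum_congr rfl fun y hy => by rw [(mem_filter.mp hy).2], sum_const, nsmul_eq_mul]
    gcongr
    exact hM v
  have hparseval : ∑ v, ‖∑ x ∈ s, χ (A x * v)‖ ^ 2 ≤ Fintype.card R * (#s * M) := by
    have h : ∑ v, ‖∑ x ∈ s, χ (A x * v)‖ ^ 2 =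
        Fintype.card R * ∑ x ∈ s, (#{y ∈ s | A x = A y} : ℝ) := by
      refine Complex.ofReal_injective ?_
      simpa using sum_norm_sq_sum_mul_addChar hχ s (fun _ => 1) A
    rw [h, ← nsmul_eq_mul #s]
    gcongr
    refine sum_le_card_nsmul _ _ _ fun x _ => ?_
    simpa only [eq_comm] using hM (A x)
  refine le_of_pow_le_pow_left₀ two_ne_zero (by positivity) ?_
  calc (∑ y ∈ s, ‖∑ x ∈ s, χ (A x * A y)‖) ^ 2
      ≤ #s * ∑ y ∈ s, ‖∑ x ∈ s, χ (A x * A y)‖ ^ 2 := sq_sum_le_card_mul_sum_sq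
    _ ≤ #s * (M * (Fintype.card R * (#s * M))) := by
        gcongr
        exact hfiber.trans (by gcongr)
    _ = (#s * M * √(Fintype.card R)) ^ 2 := by
        rw [mul_pow _ (√_), Real.sq_sqrt (Nat.cast_nonneg _)]
        ring

lemma sum_norm_sum_addChar_mul_le_add {X : Type*} [Fintype X] [DecidableEq X]
    (hχ : χ.IsPrimitive) (s : Finset X) (A : X → R) {M : ℝ}
    (hM : ∀ v, (#{x ∈ s | A x = v} : ℝ) ≤ M) :
    ∑ y, ‖∑ x, χ (A x * A y)‖ ≤
      #s * M * √(Fintype.card R) + 2 * #sᶜ * Fintype.card X := by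
  have htrivial : ∀ (t : Finset X) (b : R), ‖∑ x ∈ t, χ (A x * b)‖ ≤ #t := fun t b =>
    (norm_sum_le _ _).trans_eq (by simp)
  have hsplit : ∀ b, ‖∑ x, χ (A x * b)‖ ≤ ‖∑ x ∈ s, χ (A x * b)‖ + #sᶜ := by
    intro b
    rw [← sum_add_sum_compl s]
    exact (norm_add_le _ _).trans (by gcongr; exact htrivial _ _)
  have hs : (#s : ℝ) ≤ Fintype.card X := mod_cast card_le_univ s
  calc ∑ y, ‖∑ x, χ (A x * A y)‖ ≤ ∑ y, (‖∑ x ∈ s, χ (A x * A y)‖ + #sᶜ) :=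
        sum_le_sum fun y _ => hsplit (A y)
    _ = ∑ y ∈ s, ‖∑ x ∈ s, χ (A x * A y)‖ + ∑ y ∈ sᶜ, ‖∑ x ∈ s, χ (A x * A y)‖ +
          Fintype.card X * #sᶜ := by
        rw [sum_add_distrib, sum_add_sum_compl, sum_const, card_univ, nsmul_eq_mul]
    _ ≤ #s * M * √(Fintype.card R) + #sᶜ • (Fintype.card X : ℝ) + Fintype.card X * #sᶜ := by
        gcongr
        · exact sum_norm_sum_addChar_mul_le hχ s A hM
        · exact sum_le_card_nsmul _ _ _ fun y _ => (htrivial s _).trans hs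
    _ = _ := by
        rw [nsmul_eq_mul]
        ring

lemma card_pow_mul_norm_sum_pow_le {G : Type*} [Group G] [Fintype G] (θ : G → ℂ) (r : ℕ) :
    (Fintype.card G : ℝ) ^ (2 * r) * ‖∑ u, θ u‖ ^ r ^ 2 ≤ (Fintype.card G : ℝ) ^ r ^ 2 *
      ∑ y : Fin r → G, ‖∑ x : Fin r → G, ∏ i, ∏ l, θ (x i * y l)‖ := by
  rcases r with _ | r
  · simp
  set S := ∑ u, θ u
  set f : (Fin (r + 1) → G) → ℝ := fun y => ‖∑ u, ∏ l, θ (u * y l)‖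
  have htranslate : ∀ u, S ^ (r + 1) = ∑ y : Fin (r + 1) → G, ∏ l, θ (u * y l) := by
    intro u
    rw [show S = ∑ v, θ (u * v) from
      (Fintype.sum_equiv (Equiv.mulLeft u) _ _ fun v => rfl).symm, sum_pow', Fintype.piFinset_univ]
  have hsum : Fintype.card G * ‖S‖ ^ (r + 1) ≤ ∑ y, f y := by
    refine le_of_eq_of_le ?_ (norm_sum_le _ _)
    rw [sum_comm, ← sum_congr rfl fun u _ => htranslate u]
    simp
  have hpow : ∀ y, f y ^ (r + 1) = ‖∑ x : Fin (r + 1) → G, ∏ i, ∏ l, θ (x i * y l)‖ := by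
    intro y
    rw [← norm_pow, sum_pow', Fintype.piFinset_univ]
  have hpowermean : (∑ y, f y) ^ (r + 1) ≤
      (Fintype.card G ^ (r + 1)) ^ r * ∑ y, f y ^ (r + 1) := by
    simpa using pow_sum_le_card_mul_sum_pow (s := univ) (f := f) (fun y _ => norm_nonneg _) r
  simp only [← hpow]
  calc (Fintype.card G : ℝ) ^ (2 * (r + 1)) * ‖S‖ ^ (r + 1) ^ 2
      = Fintype.card G ^ (r + 1) * (Fintype.card G * ‖S‖ ^ (r + 1)) ^ (r + 1) := by ring
    _ ≤ Fintype.card G ^ (r + 1) *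
          ((Fintype.card G ^ (r + 1)) ^ r * ∑ y, f y ^ (r + 1)) := by
        gcongr
        exact (pow_le_pow_left₀ (by positivity) hsum _).trans hpowermean
    _ = Fintype.card G ^ (r + 1) ^ 2 * ∑ y, f y ^ (r + 1) := by ring

omit [Fintype R] [DecidableEq R] in
lemma addChar_map_sum {ι : Type*} (χ : AddChar R ℂ) (s : Finset ι) (f : ι → R) :
    χ (∑ i ∈ s, f i) = ∏ i ∈ s, χ (f i) :=
  map_prod χ.toMonoidHom (fun i => Multiplicative.ofAdd (f i)) s

omit [Fintype R] [DecidableEq R] in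
lemma prod_prod_addChar_map_mul {G ι κ : Type*} [Monoid G] [Fintype ι] [Fintype κ] (γ : G →* R)
    (χ : AddChar R ℂ) (x : ι → G) (y : κ → G) :
    ∏ i, ∏ l, χ (γ (x i * y l)) = χ ((∑ i, γ (x i)) * ∑ l, γ (y l)) := by
  simp only [sum_mul_sum, addChar_map_sum, map_mul]

theorem card_pow_mul_norm_sum_addChar_pow_le {G : Type*} [Group G] [Fintype G] [DecidableEq G]
    (hχ : χ.IsPrimitive) (γ : G →* R) {r : ℕ} (s : Finset (Fin r → G)) {M : ℝ}
    (hM : ∀ v, (#{x ∈ s | ∑ i, γ (x i) = v} : ℝ) ≤ M) :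
    (Fintype.card G : ℝ) ^ (2 * r) * ‖∑ u, χ (γ u)‖ ^ r ^ 2 ≤ (Fintype.card G : ℝ) ^ r ^ 2 *
      (#s * M * √(Fintype.card R) + 2 * #sᶜ * Fintype.card G ^ r) := by
  refine (card_pow_mul_norm_sum_pow_le _ r).trans ?_
  simp only [prod_prod_addChar_map_mul]
  gcongr
  refine (sum_norm_sum_addChar_mul_le_add hχ s _ hM).trans_eq ?_
  simp

end BilinearSums

section TwistedSums

variable {p : ℕ} [Fact p.Prime] {J : Finset ℕ}

/-- The additive character `(a, b) ↦ exp (2 π i k a / p²) ∏_{j ∈ J} exp (2 π i c_j b_j / p)`. -/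
def twistedChar (k : ZMod (p ^ 2)) (c : J → ZMod p) : AddChar (ZMod (p ^ 2) × (J → ZMod p)) ℂ :=
  (ZMod.stdAddChar.mulShift k).compAddMonoidHom (AddMonoidHom.fst _ _) *
    ∏ j, (ZMod.stdAddChar.mulShift (c j)).compAddMonoidHom
      ((Pi.evalAddMonoidHom _ j).comp (AddMonoidHom.snd _ _))

lemma twistedChar_apply (k : ZMod (p ^ 2)) (c : J → ZMod p) (v : ZMod (p ^ 2) × (J → ZMod p)) :
    twistedChar k c v = ZMod.stdAddChar (k * v.1) * ∏ j, ZMod.stdAddChar (c j * v.2 j) := by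
  simp [twistedChar, AddChar.mul_apply, AddChar.prod_apply]

lemma twistedChar_isPrimitive {k : ZMod (p ^ 2)} (hk : IsUnit k) {c : J → ZMod p}
    (hc : ∀ j, c j ≠ 0) : (twistedChar k c).IsPrimitive := by
  classical
  rintro ⟨a, b⟩ hab hone
  have htriv : ∀ v, twistedChar k c ((a, b) * v) = 1 := fun v => by
    simpa using DFunLike.congr_fun hone v
  refine hab (Prod.ext ?_ (funext fun j => ?_))
  · by_contra ha
    refine ZMod.isPrimitive_stdAddChar (p ^ 2) (hk.mul_right_eq_zero.not.mpr ha)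
      (DFunLike.ext _ _ fun x => ?_)
    simpa [twistedChar_apply, mul_assoc] using htriv (x, 0)
  · by_contra hb
    refine ZMod.isPrimitive_stdAddChar p (mul_ne_zero (hc j) hb) (DFunLike.ext _ _ fun x => ?_)
    have h := htriv (0, Pi.single j x)
    rw [twistedChar_apply, Fintype.prod_eq_single j fun i hi => by simp [hi]] at h
    simpa [mul_assoc] using h

/-- The curve `u ↦ (ũ⁻¹, (u^j)_{j ∈ J})`, where `ũ` is the Teichmüller lift of `u`. -/
def unitCurve (p : ℕ) [Fact p.Prime] (J : Finset ℕ) :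
    (ZMod p)ˣ →* ZMod (p ^ 2) × (J → ZMod p) :=
  ((teich p).comp ((Units.coeHom _).comp invMonoidHom)).prod
    (MonoidHom.pi fun j => (powMonoidHom j.1).comp (Units.coeHom _))

lemma powerSums_eq_of_sum_unitCurve_eq {κ : Type*} [Fintype κ] {x : κ → (ZMod p)ˣ}
    {v : ZMod (p ^ 2) × (J → ZMod p)} (h : ∑ i, unitCurve p J (x i) = v) :
    powerSums J (fun i => (x i : ZMod p)) = fun e => e.elim (modP p v.1) v.2 := by
  subst h
  funext e
  cases e with
  | none =>
    change ∑ i, ((x i : ZMod p))⁻¹ = modP p (∑ i, unitCurve p J (x i)).1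
    rw [Prod.fst_sum, map_sum (modP p)]
    refine sum_congr rfl fun i _ => ?_
    rw [← Units.val_inv_eq_inv_val]
    exact (modP_teich _).symm
  | some j =>
    change ∑ i, (x i : ZMod p) ^ j.1 = (∑ i, unitCurve p J (x i)).2 j
    rw [Prod.snd_sum, Finset.sum_apply]
    rfl

open Classical in
lemma card_sum_unitCurve_eq_le (hJ : ∀ j ∈ J, (j : ZMod p) ≠ 0) (r : ℕ)
    (v : ZMod (p ^ 2) × (J → ZMod p)) :
    #{x : Fin r → (ZMod p)ˣ | TangentsSpan J x ∧ ∑ i, unitCurve p J (x i) = v} ≤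
      r ^ (#J + 1) * ((1 + ∑ j ∈ J, j) ^ (#J + 1) * p ^ (r - (#J + 1))) := by
  have h := card_powerSums_eq_of_tangentsSpan_le (κ := Fin r) hJ
    fun e => e.elim (modP p v.1) v.2
  rw [Fintype.card_fin] at h
  refine (card_le_card fun x hx => ?_).trans (h.trans ?_)
  · obtain ⟨hspan, hv⟩ := (mem_filter.mp hx).2
    exact mem_filter.mpr ⟨mem_univ _, hspan, powerSums_eq_of_sum_unitCurve_eq hv⟩
  · gcongr
    exact (Fintype.card_le_of_injective _ Units.val_injective).trans_eq (ZMod.card p)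

lemma sqrt_card_prod_pi (p : ℕ) [NeZero p] (J : Finset ℕ) :
    √(Fintype.card (ZMod (p ^ 2) × (J → ZMod p))) = √p ^ (#J + 2) := by
  rw [← Real.sqrt_sq (by positivity : 0 ≤ √(p : ℝ) ^ (#J + 2)), ← pow_mul, mul_comm, pow_mul,
    Real.sq_sqrt (Nat.cast_nonneg p)]
  simp [pow_add, mul_comm]

lemma card_add_two_le_and_sum_le {w : ℕ} (hw : 2 ≤ w) (hJ : ∀ j ∈ J, 1 ≤ j ∧ j + 2 ≤ w) :
    #J + 2 ≤ w ∧ 1 + ∑ j ∈ J, j ≤ w ^ 2 := by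
  have hcard : #J ≤ w - 2 := by
    simpa using card_le_card (t := Icc 1 (w - 2)) fun j hj =>
      mem_Icc.mpr ⟨(hJ j hj).1, Nat.le_sub_of_add_le (hJ j hj).2⟩
  have hsum : ∑ j ∈ J, j ≤ #J * (w - 2) :=
    sum_le_card_nsmul _ _ _ fun j hj => Nat.le_sub_of_add_le (hJ j hj).2
  obtain ⟨v, rfl⟩ := Nat.exists_eq_add_of_le' hw
  rw [Nat.add_sub_cancel] at hcard hsum
  exact ⟨by lia, by nlinarith⟩

lemma mul_pow_add_two_mul_pow_le {w : ℕ} (hw : 2 ≤ w) (hJ : ∀ j ∈ J, 1 ≤ j ∧ j + 2 ≤ w) :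
    (2 * (#J + 1) * (1 + ∑ j ∈ J, j)) ^ (#J + 1) + 2 * w ^ (2 * (#J + 1)) ≤
      (3 * w ^ 3) ^ (#J + 1) := by
  obtain ⟨hcard, hsum⟩ := card_add_two_le_and_sum_le hw hJ
  have hbase : 2 * (#J + 1) * (1 + ∑ j ∈ J, j) ≤ 2 * w ^ 3 :=
    calc 2 * (#J + 1) * (1 + ∑ j ∈ J, j) ≤ 2 * w * w ^ 2 := by
          gcongr
          lia
      _ = 2 * w ^ 3 := by ring
  have htwo : 2 ≤ w ^ (#J + 1) := hw.trans (Nat.le_self_pow (by lia) w)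
  have hthree : 2 ^ (#J + 1) + 1 ≤ 3 ^ (#J + 1) := Nat.pow_lt_pow_left (by lia) (by lia)
  calc (2 * (#J + 1) * (1 + ∑ j ∈ J, j)) ^ (#J + 1) + 2 * w ^ (2 * (#J + 1))
      ≤ (2 * w ^ 3) ^ (#J + 1) + w ^ (#J + 1) * w ^ (2 * (#J + 1)) := by gcongr
    _ = (2 ^ (#J + 1) + 1) * (w ^ 3) ^ (#J + 1) := by ring
    _ ≤ 3 ^ (#J + 1) * (w ^ 3) ^ (#J + 1) := by gcongr
    _ = (3 * w ^ 3) ^ (#J + 1) := (mul_pow _ _ _).symm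

open Classical in
lemma card_fiber_unitCurve_le {w : ℕ} (hJ : ∀ j ∈ J, 1 ≤ j ∧ j + 2 ≤ w) (hwp : w ≤ p)
    (v : ZMod (p ^ 2) × (J → ZMod p)) :
    #{x : Fin (2 * (#J + 1)) → (ZMod p)ˣ | TangentsSpan J x ∧ ∑ i, unitCurve p J (x i) = v} ≤
      (2 * (#J + 1) * (1 + ∑ j ∈ J, j) * p) ^ (#J + 1) := by
  have hJp : ∀ j ∈ J, (j : ZMod p) ≠ 0 := fun j hj h0 => by
    have := Nat.le_of_dvd (hJ j hj).1 ((ZMod.natCast_eq_zero_iff j p).mp h0)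
    have := (hJ j hj).2
    lia
  refine (card_sum_unitCurve_eq_le hJp (2 * (#J + 1)) v).trans_eq ?_
  rw [show 2 * (#J + 1) - (#J + 1) = #J + 1 by lia]
  simp only [mul_pow, mul_assoc]

lemma le_pow_mul_of_pow_mul_le {u x S D : ℝ} (hu : 0 < u) (hux : u ≤ x) (hD : 0 ≤ D) {a b : ℕ}
    (hab : a ≤ b) (h : u ^ a * S ≤ u ^ b * (x ^ a * D)) : S ≤ x ^ b * D := by
  obtain ⟨b, rfl⟩ := Nat.exists_eq_add_of_le hab
  rw [pow_add, mul_assoc] at h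
  calc S ≤ u ^ b * (x ^ a * D) := le_of_mul_le_mul_left h (by positivity)
    _ ≤ x ^ b * (x ^ a * D) := by have := hu.le.trans hux; gcongr
    _ = x ^ (a + b) * D := by ring

lemma sqrt_pow_le_pow {x : ℝ} (hx : 1 ≤ x) {m n : ℕ} (hmn : m ≤ n) : √x ^ m ≤ x ^ n :=
  (pow_le_pow_left₀ (Real.sqrt_nonneg _) (Real.sqrt_le_self_iff.mpr (Or.inr hx)) _).trans
    (pow_le_pow_right₀ hx hmn)

lemma card_units_zmod_le : Fintype.card (ZMod p)ˣ ≤ p :=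
  (Fintype.card_le_of_injective _ Units.val_injective).trans_eq (ZMod.card p)

lemma card_units_pow_mul_norm_sum_twistedChar_pow_le {k : ZMod (p ^ 2)} (hk : IsUnit k)
    {c : J → ZMod p} (hc : ∀ j, c j ≠ 0) {w : ℕ} (hJ : ∀ j ∈ J, 1 ≤ j ∧ j + 2 ≤ w) (hw : 2 ≤ w)
    (hwp : w ≤ p) :
    (Fintype.card (ZMod p)ˣ : ℝ) ^ (2 * (2 * (#J + 1))) *
        (‖∑ u, twistedChar k c (unitCurve p J u)‖ ^ (2 * (#J + 1)) ^ 2 * √p ^ #J) ≤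
      Fintype.card (ZMod p)ˣ ^ (2 * (#J + 1)) ^ 2 *
        (p ^ (2 * (2 * (#J + 1))) * (3 * w ^ 3) ^ (#J + 1)) := by
  classical
  set n := #J + 1
  set B := 1 + ∑ j ∈ J, j
  set u := Fintype.card (ZMod p)ˣ
  let G : Finset (Fin (2 * n) → (ZMod p)ˣ) := {x | TangentsSpan J x}
  have hup : u ≤ p := card_units_zmod_le
  have hG : (#G : ℝ) ≤ p ^ (2 * n) := mod_cast
    (card_le_univ G).trans
      ((Fintype.card_fun.trans (by rw [Fintype.card_fin])).trans_le (Nat.pow_le_pow_left hup _))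
  have hGc : (#Gᶜ : ℝ) ≤ p ^ n * w ^ (2 * n) := by
    have h := card_not_tangentsSpan_le (F := ZMod p) (κ := Fin (2 * n)) (J := J) (w := w)
      fun j hj => by have := (hJ j hj).2; lia
    rw [compl_filter]
    exact_mod_cast (by simpa using h)
  have hfiber : ∀ v, (#{x ∈ G | ∑ i, unitCurve p J (x i) = v} : ℝ) ≤ (2 * n * B * p) ^ n :=
    fun v => by
      rw [filter_filter]
      exact_mod_cast card_fiber_unitCurve_le hJ hwp v
  have hmain := card_pow_mul_norm_sum_addChar_pow_le (twistedChar_isPrimitive hk hc)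
    (unitCurve p J) G hfiber
  rw [sqrt_card_prod_pi] at hmain
  have hsqrt : √(p : ℝ) ^ #J ≤ p ^ n :=
    sqrt_pow_le_pow (mod_cast (Fact.out : p.Prime).one_le) (Nat.le_succ _)
  rw [← mul_assoc]
  refine (mul_le_mul_of_nonneg_right hmain (by positivity)).trans ?_
  rw [mul_assoc]
  gcongr _ * ?_
  calc (#G * (2 * n * B * p) ^ n * √p ^ (#J + 2) + 2 * #Gᶜ * u ^ (2 * n)) * √p ^ #J
      = #G * (2 * n * B * p) ^ n * (√p ^ 2) ^ n + 2 * #Gᶜ * u ^ (2 * n) * √p ^ #J := by ring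
    _ ≤ p ^ (2 * n) * (2 * n * B * p) ^ n * p ^ n +
          2 * (p ^ n * w ^ (2 * n)) * p ^ (2 * n) * p ^ n := by
        rw [Real.sq_sqrt (Nat.cast_nonneg p)]
        gcongr
    _ = p ^ (2 * (2 * n)) * ((2 * n * B) ^ n + 2 * w ^ (2 * n)) := by ring
    _ ≤ p ^ (2 * (2 * n)) * (3 * w ^ 3) ^ n := by
        gcongr
        exact_mod_cast mul_pow_add_two_mul_pow_le hw hJ

theorem norm_sum_twistedChar_pow_le {k : ZMod (p ^ 2)} (hk : IsUnit k) {c : J → ZMod p}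
    (hc : ∀ j, c j ≠ 0) {w : ℕ} (hJ : ∀ j ∈ J, 1 ≤ j ∧ j + 2 ≤ w) (hw : 2 ≤ w) (hwp : w ≤ p) :
    ‖∑ u, twistedChar k c (unitCurve p J u)‖ ^ (2 * (#J + 1)) ^ 2 * √p ^ #J ≤
      (p : ℝ) ^ (2 * (#J + 1)) ^ 2 * (3 * w ^ 3) ^ (#J + 1) := by
  refine le_pow_mul_of_pow_mul_le (mod_cast Fintype.card_pos) (mod_cast card_units_zmod_le)
    (by positivity) (by nlinarith) (card_units_pow_mul_norm_sum_twistedChar_pow_le hk hc hJ hw hwp)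

lemma exp_one_mul_log_pow_le {x : ℝ} (hx : 1 ≤ x) (m N : ℕ) :
    (Real.exp 1 * m / (2 * N) * Real.log (2 * x)) ^ N ≤ 2 ^ m * √x ^ m := by
  refine le_of_sq_le_sq ?_ (by positivity)
  calc ((Real.exp 1 * m / (2 * N) * Real.log (2 * x)) ^ N) ^ 2
      = (Real.exp 1 / ((2 * N : ℕ) : ℝ) * Real.log ((2 * x) ^ m)) ^ (2 * N) := by
        rw [Real.log_pow]
        push_cast
        ring
    _ ≤ (2 * x) ^ m := exp_one_div_mul_log_pow_le (one_le_pow₀ (by linarith)) _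
    _ ≤ (2 * 2 * x) ^ m := by gcongr; norm_num
    _ = (2 ^ m * √x ^ m) ^ 2 := by
        rw [← mul_pow, ← pow_mul, mul_comm m, pow_mul, mul_pow 2 √x, Real.sq_sqrt (by linarith)]
        norm_num

lemma six_mul_add_two_pow_three_le {m : ℕ} (hm : 1 ≤ m) :
    6 * ((m : ℝ) + 2) ^ 3 ≤ (9 / 4) ^ (4 * (m + 1)) := by
  induction m, hm using Nat.le_induction with
  | base => norm_num
  | succ m hm ih =>
    calc 6 * (((m + 1 : ℕ) : ℝ) + 2) ^ 3 ≤ 6 * (2 * ((m : ℝ) + 2)) ^ 3 := by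
          gcongr
          push_cast
          linarith [(Nat.cast_nonneg m : (0 : ℝ) ≤ m)]
      _ = 6 * ((m : ℝ) + 2) ^ 3 * 8 := by ring
      _ ≤ (9 / 4) ^ (4 * (m + 1)) * (9 / 4) ^ 4 := by
          gcongr
          norm_num
      _ = (9 / 4) ^ (4 * (m + 1 + 1)) := by ring

lemma six_mul_pow_three_le {m : ℕ} (hm : 1 ≤ m) {w : ℝ} (hw : m + 2 ≤ w) :
    6 * w ^ 3 ≤ (9 * w * (Real.exp 1 * m / (2 * (2 * (m + 1)) ^ 2))) ^ (4 * (m + 1)) := by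
  have hm' : (1 : ℝ) ≤ m := mod_cast hm
  have he : (2.7 : ℝ) ≤ Real.exp 1 := by linarith [Real.exp_one_gt_d9]
  have hratio : 1 ≤ w / (m + 2) := (one_le_div₀ (by positivity)).mpr hw
  have hbase : 9 / 4 * (w / (m + 2)) ≤ 9 * w * (Real.exp 1 * m / (2 * (2 * (m + 1)) ^ 2)) := by
    have h : 1 / ((m : ℝ) + 2) * (1 / 4) ≤ Real.exp 1 * m / (2 * (2 * (m + 1)) ^ 2) := by
      rw [div_mul_div_comm, div_le_div_iff₀ (by positivity) (by positivity)]
      nlinarith [mul_le_mul_of_nonneg_right he (show (0 : ℝ) ≤ m * (m + 2) by positivity)]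
    calc 9 / 4 * (w / (m + 2)) = 9 * w * (1 / ((m : ℝ) + 2) * (1 / 4)) := by ring
      _ ≤ _ := by
        have : 0 ≤ w := by linarith
        gcongr
  calc 6 * w ^ 3 = 6 * ((m : ℝ) + 2) ^ 3 * (w / (m + 2)) ^ 3 := by field_simp
    _ ≤ (9 / 4) ^ (4 * (m + 1)) * (w / (m + 2)) ^ (4 * (m + 1)) := by
        gcongr
        · exact six_mul_add_two_pow_three_le hm
        · lia
    _ = (9 / 4 * (w / (m + 2))) ^ (4 * (m + 1)) := (mul_pow _ _ _).symm
    _ ≤ _ := by gcongr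

lemma log_mul_le_of_pow_mul_sqrt_pow_le {x S w : ℝ} (hx : 1 ≤ x) {m : ℕ} (hm : 1 ≤ m)
    (hw : m + 2 ≤ w)
    (h : S ^ (2 * (m + 1)) ^ 2 * √x ^ m ≤ x ^ (2 * (m + 1)) ^ 2 * (3 * w ^ 3) ^ (m + 1)) :
    Real.log (2 * x) * S ≤ 9 * x * w := by
  set N := (2 * (m + 1)) ^ 2 with hN
  set T := Real.log (2 * x)
  set y := Real.exp 1 * m / (2 * (2 * ((m : ℝ) + 1)) ^ 2) with hy
  have hT : 0 ≤ T := Real.log_nonneg (by linarith)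
  have hw0 : 0 ≤ w := le_trans (by positivity) hw
  have hyT : (y * T) ^ N ≤ 2 ^ m * √x ^ m := by
    simpa [hN, hy] using exp_one_mul_log_pow_le hx m N
  have hTw : T ^ N * (3 * w ^ 3) ^ (m + 1) ≤ (9 * w) ^ N * √x ^ m := by
    refine le_of_mul_le_mul_left ?_ (pow_pos two_pos (m + 1))
    calc 2 ^ (m + 1) * (T ^ N * (3 * w ^ 3) ^ (m + 1)) = T ^ N * (6 * w ^ 3) ^ (m + 1) := by
          rw [mul_left_comm, ← mul_pow, ← mul_assoc]
          norm_num
      _ ≤ T ^ N * ((9 * w * y) ^ (4 * (m + 1))) ^ (m + 1) := by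
          gcongr
          exact six_mul_pow_three_le hm hw
      _ = (9 * w) ^ N * (y * T) ^ N := by
          rw [← pow_mul, show 4 * (m + 1) * (m + 1) = N by rw [hN]; ring]
          ring
      _ ≤ (9 * w) ^ N * (2 ^ (m + 1) * √x ^ m) := by
          gcongr
          refine hyT.trans ?_
          gcongr <;> [norm_num; lia]
      _ = 2 ^ (m + 1) * ((9 * w) ^ N * √x ^ m) := by ring
  refine le_of_pow_le_pow_left₀ (n := N) (by positivity) (by positivity) ?_
  refine le_of_mul_le_mul_right ?_ (show 0 < √x ^ m by positivity)
  calc (T * S) ^ N * √x ^ m = T ^ N * (S ^ N * √x ^ m) := by ring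
    _ ≤ T ^ N * (x ^ N * (3 * w ^ 3) ^ (m + 1)) := by gcongr
    _ = x ^ N * (T ^ N * (3 * w ^ 3) ^ (m + 1)) := by ring
    _ ≤ x ^ N * ((9 * w) ^ N * √x ^ m) := by gcongr
    _ = (9 * x * w) ^ N * √x ^ m := by ring

theorem log_mul_norm_sum_twistedChar_le (hT : 10 ≤ Real.log (2 * p)) {k : ZMod (p ^ 2)}
    (hk : IsUnit k) {c : J → ZMod p} (hc : ∀ j, c j ≠ 0) {w : ℕ}
    (hJ : ∀ j ∈ J, 1 ≤ j ∧ j + 2 ≤ w) (hw : 1 ≤ w) (hwp : w ≤ p) :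
    Real.log (2 * p) * ‖∑ u, twistedChar k c (unitCurve p J u)‖ ≤ 9 * p * w := by
  obtain rfl | ⟨j, hj⟩ := J.eq_empty_or_nonempty
  · have hsum : ∑ u, twistedChar k c (unitCurve p ∅ u) = heilbronnSum p k :=
      Fintype.sum_equiv (Equiv.inv _) _ _ fun u => by
        rw [twistedChar_apply, univ_eq_empty, prod_empty, mul_one]
        rfl
    rw [hsum]
    have : (1 : ℝ) ≤ w := mod_cast hw
    calc _ ≤ 9 * (p : ℝ) := log_mul_norm_heilbronnSum_le hT hk
      _ ≤ 9 * p * w := le_mul_of_one_le_right (by positivity) this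
  · have hw2 : 2 ≤ w := le_of_add_le_right (hJ j hj).2
    have hcard : #J + 2 ≤ w := (card_add_two_le_and_sum_le hw2 hJ).1
    exact log_mul_le_of_pow_mul_sqrt_pow_le (mod_cast (Fact.out : p.Prime).one_le)
      (card_pos.mpr ⟨j, hj⟩) (mod_cast hcard) (norm_sum_twistedChar_pow_le hk hc hJ hw2 hwp)

end TwistedSums

/-! ### Complete exponential sums modulo the square of a prime -/

section CompleteSums

open Polynomial

lemma card_roots_add_natTrailingDegree_le {F : Type*} [Field F] [Fintype F] [DecidableEq F]
    {Q : F[X]} (hQ : Q ≠ 0) : #{a | Q.eval a = 0} + Q.natTrailingDegree ≤ Q.natDegree + 1 := by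
  have hsub : ({a | Q.eval a = 0} : Finset F) ⊆ insert 0 (Q.roots.filter (¬0 = ·)).toFinset := by
    intro a ha
    rcases eq_or_ne 0 a with rfl | ha0
    · exact mem_insert_self _ _
    · simpa [hQ, ha0, ha0.symm] using ha
  have hcard : #{a | Q.eval a = 0} ≤ (Q.roots.filter (¬0 = ·)).card + 1 :=
    ((card_le_card hsub).trans (card_insert_le _ _)).trans
      (Nat.add_le_add_right (Multiset.toFinset_card_le _) 1)
  have htrail : (Q.roots.filter (0 = ·)).card = Q.natTrailingDegree := by
    rw [← Multiset.count_eq_card_filter_eq, count_roots, rootMultiplicity_eq_natTrailingDegree']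
  have hsplit := congrArg Multiset.card (Multiset.filter_add_not (0 = ·) Q.roots)
  rw [Multiset.card_add, htrail] at hsplit
  have := Q.card_roots'
  omega

lemma exists_eq_monomial_add_C_mul {R : Type*} [CommRing R] [IsDomain R] {P : R[X]} {r : R}
    (hr : r ≠ 0) {n : ℕ} (hP : ∀ i ≠ n, r ∣ P.coeff i) :
    ∃ Q : R[X], P = monomial n (P.coeff n) + C r * Q ∧ Q.support ⊆ P.support.erase n := by
  obtain ⟨Q, hQ⟩ : C r ∣ P.erase n := by
    rw [C_dvd_iff_dvd_coeff]
    intro i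
    rw [coeff_erase]
    split_ifs with h
    exacts [dvd_zero _, hP i h]
  refine ⟨Q, by rw [← hQ, monomial_add_erase], fun i hi => ?_⟩
  rw [← support_erase, hQ, mem_support_iff, coeff_C_mul]
  exact mul_ne_zero hr (mem_support_iff.mp hi)

variable {p : ℕ} [Fact p.Prime]

lemma mulP_injective : Function.Injective (mulP p) := fun x y h =>
  ZMod.injective_stdAddChar (by rw [← stdAddChar_mulP x, ← stdAddChar_mulP y, h])

lemma modP_mulP (x : ZMod p) : modP p (mulP p x) = 0 := by
  obtain ⟨x, rfl⟩ := ZMod.intCast_surjective x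
  rw [mulP_intCast, map_mul (modP p), map_natCast, ZMod.natCast_self, zero_mul]

lemma teich_add_mulP_bijective :
    Function.Bijective fun v : ZMod p × ZMod p => teich p v.1 + mulP p v.2 := by
  rw [Fintype.bijective_iff_injective_and_card]
  refine ⟨?_, by rw [Fintype.card_prod, ZMod.card, ZMod.card, sq]⟩
  rintro ⟨a, b⟩ ⟨a', b'⟩ h
  have ha : a = a' := by simpa [modP_teich, modP_mulP] using congrArg (modP p) h
  subst ha
  exact Prod.ext rfl (mulP_injective (add_left_cancel h))

lemma modP_aeval_teich (P : ℤ[X]) (a : ZMod p) : modP p (aeval (teich p a) P) = aeval a P := by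
  have h := aeval_algHom_apply (modP p).toIntAlgHom (teich p a) P
  rw [RingHom.toIntAlgHom_apply, modP_teich] at h
  exact h.symm

omit [Fact p.Prime] in
lemma mulP_modP (x : ZMod (p ^ 2)) : mulP p (modP p x) = p * x := by
  obtain ⟨x, rfl⟩ := ZMod.intCast_surjective x
  rw [map_intCast, mulP_intCast]

lemma stdAddChar_aeval_teich_add_mulP (P : ℤ[X]) (a b : ZMod p) :
    (ZMod.stdAddChar (aeval (teich p a + mulP p b) P) : ℂ) =
      ZMod.stdAddChar (aeval (teich p a) P) * ZMod.stdAddChar (b * aeval a (derivative P)) := by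
  have hsq : mulP p b ^ 2 = 0 := by
    rw [sq (mulP p b), mul_mulP, modP_mulP, zero_mul, map_zero]
  rw [aeval_add_of_sq_eq_zero _ _ _ hsq, AddChar.map_add_eq_mul, mul_mulP, modP_aeval_teich,
    stdAddChar_mulP, mul_comm b]

lemma sum_stdAddChar_aeval (P : ℤ[X]) :
    ∑ x : ZMod (p ^ 2), (ZMod.stdAddChar (aeval x P) : ℂ) =
      p * ∑ a : ZMod p with aeval a (derivative P) = 0, ZMod.stdAddChar (aeval (teich p a) P) := by
  rw [← teich_add_mulP_bijective.sum_comp, Fintype.sum_prod_type, sum_filter, mul_sum]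
  refine sum_congr rfl fun a _ => ?_
  simp only [stdAddChar_aeval_teich_add_mulP, ← mul_sum,
    AddChar.sum_mulShift _ (ZMod.isPrimitive_stdAddChar p), ZMod.card]
  split_ifs <;> simp [mul_comm]

lemma norm_sum_stdAddChar_aeval_le (P : ℤ[X]) :
    ‖∑ x : ZMod (p ^ 2), (ZMod.stdAddChar (aeval x P) : ℂ)‖ ≤
      p * #{a : ZMod p | aeval a (derivative P) = 0} := by
  rw [sum_stdAddChar_aeval, norm_mul, Complex.norm_natCast]
  gcongr
  refine (norm_sum_le _ _).trans_eq ?_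
  simp

lemma norm_sum_stdAddChar_aeval_le_sq (P : ℤ[X]) :
    ‖∑ x : ZMod (p ^ 2), (ZMod.stdAddChar (aeval x P) : ℂ)‖ ≤ p ^ 2 := by
  refine (norm_sum_le _ _).trans_eq ?_
  simp [ZMod.card]

lemma coeff_map_derivative (P : ℤ[X]) (j : ℕ) :
    ((derivative P).map (Int.castRingHom (ZMod p))).coeff j =
      (P.coeff (j + 1) : ZMod p) * (j + 1 : ℕ) := by
  rw [coeff_map, coeff_derivative]
  push_cast
  simp

theorem norm_sum_stdAddChar_aeval_le_mul_width {P : ℤ[X]} {w n : ℕ}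
    (hP : ∀ i ∈ P.support, ∀ j ∈ P.support, i < j + w) (hn : ¬ p ∣ n)
    (hPn : ¬ (p : ℤ) ∣ P.coeff n) :
    ‖∑ x : ZMod (p ^ 2), (ZMod.stdAddChar (aeval x P) : ℂ)‖ ≤ p * w := by
  set Q := (derivative P).map (Int.castRingHom (ZMod p))
  have hcoeff : ∀ j, Q.coeff j = _ := coeff_map_derivative P
  have hQ0 : Q ≠ 0 := by
    obtain ⟨l, rfl⟩ : ∃ l, n = l + 1 := Nat.exists_eq_succ_of_ne_zero fun h => hn (h ▸ dvd_zero p)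
    intro h
    have h0 := hcoeff l
    rw [h, coeff_zero] at h0
    rcases mul_eq_zero.mp h0.symm with h | h
    · exact hPn ((ZMod.intCast_zmod_eq_zero_iff_dvd _ _).mp h)
    · exact hn ((ZMod.natCast_eq_zero_iff _ _).mp h)
  have hsupp : ∀ j ∈ Q.support, j + 1 ∈ P.support := by
    intro j hj
    rw [mem_support_iff, hcoeff] at hj
    rw [mem_support_iff]
    exact fun h => hj (by rw [h, Int.cast_zero, zero_mul])
  have hdeg := hP _ (hsupp _ (natDegree_mem_support_of_nonzero hQ0)) _
    (hsupp _ (natTrailingDegree_mem_support_of_nonzero hQ0))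
  have hroots := card_roots_add_natTrailingDegree_le hQ0
  have heval : ∀ a : ZMod p, Q.eval a = aeval a (derivative P) := eval_map_algebraMap _
  simp only [heval] at hroots
  refine (norm_sum_stdAddChar_aeval_le P).trans ?_
  gcongr
  omega

lemma eval_inv_eq_eval_reflect {H : (ZMod p)[X]} (hH : H.natDegree ≤ p - 1) (u : (ZMod p)ˣ) :
    H.eval (u⁻¹ : (ZMod p)ˣ).val = (H.reflect (p - 1)).eval u.val := by
  let : Invertible (u⁻¹ : (ZMod p)ˣ).val := (u⁻¹).invertible
  have h := eval₂_reflect_mul_pow (RingHom.id _) (u⁻¹ : (ZMod p)ˣ).val (p - 1) H hH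
  rw [ZMod.pow_card_sub_one_eq_one (u⁻¹).ne_zero, mul_one, invOf_units, inv_inv] at h
  exact h.symm

lemma eval_eq_coeff_zero_add_sum {R : Type*} [CommRing R] (H : R[X]) (x : R) :
    H.eval x = H.coeff 0 + ∑ j : (H.support.erase 0 : Finset ℕ), H.coeff j * x ^ (j : ℕ) := by
  rw [sum_coe_sort (H.support.erase 0) fun j => H.coeff j * x ^ j, eval_eq_sum, sum_def]
  by_cases h : 0 ∈ H.support
  · rw [← add_sum_erase _ _ h, pow_zero, mul_one]
  · rw [erase_eq_of_notMem h, notMem_support_iff.mp h, zero_add]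

lemma norm_sum_units_stdAddChar_eq {H : (ZMod p)[X]} (hH : H.natDegree ≤ p - 1)
    (κ : ZMod (p ^ 2)) :
    ‖∑ u : (ZMod p)ˣ, (ZMod.stdAddChar (κ * teich p u) * ZMod.stdAddChar (H.eval u.val) : ℂ)‖ =
      ‖∑ u, twistedChar κ (fun j => (H.reflect (p - 1)).coeff j)
        (unitCurve p ((H.reflect (p - 1)).support.erase 0) u)‖ := by
  set g := H.reflect (p - 1)
  suffices hsum : ∑ u : (ZMod p)ˣ,
      (ZMod.stdAddChar (κ * teich p u) * ZMod.stdAddChar (H.eval u.val) : ℂ) =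
      ZMod.stdAddChar (g.coeff 0) *
        ∑ u, twistedChar κ (fun j => g.coeff j) (unitCurve p (g.support.erase 0) u) by
    rw [hsum, norm_mul, AddChar.norm_apply, one_mul]
  rw [mul_sum]
  refine (Fintype.sum_equiv (Equiv.inv _) _ _ fun u => ?_).symm
  rw [Equiv.inv_apply, eval_inv_eq_eval_reflect hH, eval_eq_coeff_zero_add_sum,
    AddChar.map_add_eq_mul, addChar_map_sum, twistedChar_apply, mul_left_comm]
  rfl

lemma log_two_mul_le {x : ℝ} (hx : 0 < x) : Real.log (2 * x) ≤ x := by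
  have h2 := Real.log_le_sub_one_of_pos (zero_lt_two (α := ℝ))
  have hlog := Real.log_le_sub_one_of_pos hx
  rw [Real.log_mul two_ne_zero hx.ne']
  linarith

theorem log_mul_norm_sum_stdAddChar_teich_le (hT : 10 ≤ Real.log (2 * p)) {H : (ZMod p)[X]}
    (hH : H.natDegree ≤ p - 1) {κ : ZMod (p ^ 2)} (hκ : IsUnit κ) {w : ℕ} (hw : 1 ≤ w)
    (hwp : w ≤ p) (hHw : ∀ n ∈ H.support, p + 1 ≤ n + w) :
    Real.log (2 * p) *
      ‖∑ x : ZMod p, (ZMod.stdAddChar (κ * teich p x) * ZMod.stdAddChar (H.eval x) : ℂ)‖ ≤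
        10 * p * w := by
  set F : ZMod p → ℂ := fun x => ZMod.stdAddChar (κ * teich p x) * ZMod.stdAddChar (H.eval x)
  have hsplit : ∑ x, F x = F 0 + ∑ u : (ZMod p)ˣ, F u := by
    rw [Fintype.sum_eq_add_sum_subtype_ne F 0, ← unitsEquivNeZero.sum_comp]
    rfl
  have hF0 : ‖F 0‖ = 1 := by rw [norm_mul, AddChar.norm_apply, AddChar.norm_apply, one_mul]
  have hunits : Real.log (2 * p) * ‖∑ u : (ZMod p)ˣ, F u‖ ≤ 9 * p * w := by
    rw [norm_sum_units_stdAddChar_eq hH]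
    refine log_mul_norm_sum_twistedChar_le hT hκ
      (fun j => mem_support_iff.mp (mem_of_mem_erase j.2)) (fun j hj => ?_) hw hwp
    obtain ⟨hj0, hj⟩ := mem_erase.mp hj
    have hjp : j ≤ p - 1 :=
      (le_natDegree_of_mem_supp j hj).trans (natDegree_reflect_le.trans (max_le le_rfl hH))
    rw [mem_support_iff, coeff_reflect, revAt_le hjp, ← mem_support_iff] at hj
    have := hHw _ hj
    omega
  have hlog : Real.log (2 * p) ≤ p * w :=
    (log_two_mul_le (Nat.cast_pos.mpr (NeZero.pos p))).trans
      (le_mul_of_one_le_right (Nat.cast_nonneg p) (mod_cast hw))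
  calc Real.log (2 * p) * ‖∑ x, F x‖ ≤ Real.log (2 * p) * (1 + ‖∑ u : (ZMod p)ˣ, F u‖) := by
        rw [hsplit, ← hF0]
        gcongr
        exact norm_add_le _ _
    _ ≤ 10 * p * w := by linarith

lemma stdAddChar_aeval_teich_monomial_add (R : ℤ[X]) (c : ℤ) (a : ZMod p) :
    (ZMod.stdAddChar (aeval (teich p a) (monomial p c + C (p : ℤ) * R)) : ℂ) =
      ZMod.stdAddChar (c * teich p a : ZMod (p ^ 2)) * ZMod.stdAddChar (aeval a R) := by
  rw [← stdAddChar_mulP (aeval a R), ← modP_aeval_teich R a, mulP_modP, ← AddChar.map_add_eq_mul,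
    map_add, aeval_monomial, map_mul, aeval_C, ← map_pow, ZMod.pow_card]
  simp

theorem log_mul_norm_sum_stdAddChar_aeval_teich_le (hT : 10 ≤ Real.log (2 * p)) {P : ℤ[X]}
    (hdeg : P.natDegree ≤ p) (hPp : ¬ (p : ℤ) ∣ P.coeff p)
    (hP : ∀ n ≠ p, (p : ℤ) ∣ P.coeff n) {w : ℕ} (hwp : w ≤ p)
    (hPw : ∀ n ∈ P.support, p + 1 ≤ n + w) :
    Real.log (2 * p) * ‖∑ a : ZMod p, (ZMod.stdAddChar (aeval (teich p a) P) : ℂ)‖ ≤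
      10 * p * w := by
  obtain ⟨R, hR, hRsupp⟩ :=
    exists_eq_monomial_add_C_mul (Nat.cast_ne_zero.mpr (NeZero.ne p)) hP
  set c := P.coeff p with hc_def
  set H := R.map (Int.castRingHom (ZMod p))
  have hsupp : ∀ n ∈ H.support, n ≠ p ∧ n ∈ P.support := fun n hn =>
    mem_erase.mp (hRsupp (support_map_subset _ _ hn))
  have hphase : ∀ a : ZMod p, (ZMod.stdAddChar (aeval (teich p a) P) : ℂ) =
      ZMod.stdAddChar ((c : ZMod (p ^ 2)) * teich p a) * ZMod.stdAddChar (H.eval a) := fun a => by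
    rw [hR, stdAddChar_aeval_teich_monomial_add]
    exact congrArg _ (congrArg _ (eval_map_algebraMap _ _).symm)
  have hc : IsUnit (c : ZMod (p ^ 2)) := by
    rw [ZMod.coe_int_isUnit_iff_isCoprime, Nat.cast_pow]
    exact ((Nat.prime_iff_prime_int.mp Fact.out).coprime_iff_not_dvd.mpr hPp).pow_left
  have hw : 1 ≤ w := by
    have := hPw p (mem_support_iff.mpr fun h => hPp (hc_def.trans h ▸ dvd_zero _))
    omega
  simp only [hphase]
  refine log_mul_norm_sum_stdAddChar_teich_le hT (natDegree_le_iff_coeff_eq_zero.mpr ?_) hc hw hwp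
    fun n hn => hPw n (hsupp n hn).2
  intro n hn
  by_contra h
  obtain ⟨hnp, hnP⟩ := hsupp n (mem_support_iff.mpr h)
  have := (le_natDegree_of_mem_supp n hnP).trans hdeg
  omega

theorem log_mul_norm_sum_stdAddChar_aeval_le {P : ℤ[X]} (hdeg : P.natDegree ≤ p)
    (hPp : ¬ (p : ℤ) ∣ P.coeff p) (hP : ∀ n ≠ p, (p : ℤ) ∣ P.coeff n) {w : ℕ} (hwp : w ≤ p)
    (hPw : ∀ n ∈ P.support, p + 1 ≤ n + w) {x : ℝ} (hx : 1 ≤ x) (hxp : x ≤ 2 * p) :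
    Real.log x * ‖∑ y : ZMod (p ^ 2), (ZMod.stdAddChar (aeval y P) : ℂ)‖ ≤ 10 * p ^ 2 * w := by
  have hlog : Real.log x ≤ Real.log (2 * p) := Real.log_le_log (by linarith) hxp
  have hw : (1 : ℝ) ≤ w := by
    have := hPw p (mem_support_iff.mpr fun h => hPp (h ▸ dvd_zero _))
    exact_mod_cast (by omega : 1 ≤ w)
  rcases le_total (Real.log x) 10 with hx10 | hx10
  · calc _ ≤ (10 : ℝ) * p ^ 2 := by
          gcongr
          exact norm_sum_stdAddChar_aeval_le_sq P
      _ ≤ 10 * p ^ 2 * w := le_mul_of_one_le_right (by positivity) hw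
  have hderiv : ∀ a : ZMod p, aeval a (derivative P) = 0 := by
    have hzero : (derivative P).map (Int.castRingHom (ZMod p)) = 0 := by
      ext j
      rw [coeff_map_derivative, coeff_zero]
      by_cases hj : j + 1 = p
      · rw [hj, ZMod.natCast_self, mul_zero]
      · rw [(ZMod.intCast_zmod_eq_zero_iff_dvd _ _).mpr (hP _ hj), zero_mul]
    intro a
    rw [← eval_map_algebraMap]
    exact (congrArg (eval a) hzero).trans eval_zero
  rw [sum_stdAddChar_aeval, filter_true_of_mem fun a _ => hderiv a, norm_mul, Complex.norm_natCast]
  have hS := log_mul_norm_sum_stdAddChar_aeval_teich_le (hx10.trans hlog) hdeg hPp hP hwp hPw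
  set S := ‖∑ a : ZMod p, (ZMod.stdAddChar (aeval (teich p a) P) : ℂ)‖
  calc Real.log x * (p * S) = p * (Real.log x * S) := by ring
    _ ≤ p * (Real.log (2 * p) * S) := by gcongr
    _ ≤ p * (10 * p * w) := by gcongr
    _ = 10 * p ^ 2 * w := by ring

end CompleteSums

/-! ### Exponential sums over Korobov's point sets -/

section Korobov

open Polynomial

variable {d : ℕ} {k : Fin d → ℤ}

lemma mem_supp {j : Fin d} : j ∈ supp k ↔ k j ≠ 0 := by
  simp only [supp, mem_filter, mem_univ, true_and]

lemma supp_nonempty_iff : (supp k).Nonempty ↔ k ≠ 0 := by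
  simp only [Finset.Nonempty, mem_supp, Function.ne_iff, Pi.zero_apply]

lemma one_le_width (k : Fin d → ℤ) : 1 ≤ width k := by
  unfold width
  split_ifs <;> omega

lemma lt_add_width {i j : Fin d} (hi : k i ≠ 0) (hj : k j ≠ 0) : (i : ℕ) < j + width k := by
  have hne : (supp k).Nonempty := ⟨i, mem_supp.mpr hi⟩
  have hmax : (i : ℕ) ≤ (supp k).max' hne := (supp k).le_max' i (mem_supp.mpr hi)
  have hmin : ((supp k).min' hne : ℕ) ≤ j := (supp k).min'_le j (mem_supp.mpr hj)
  rw [width, dif_pos hne]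
  omega

lemma width_le (hd : 1 ≤ d) (k : Fin d → ℤ) : width k ≤ d := by
  unfold width
  split_ifs with hne
  · have := ((supp k).max' hne).isLt
    omega
  · exact hd

/-- The polynomial `∑ⱼ kⱼ Xʲ⁺¹`, whose value at `h` divided by `p²` is, modulo `1`, the scalar
product of `k` with the `h`-th Korobov point. -/
def korobovPoly (k : Fin d → ℤ) : ℤ[X] :=
  ∑ j : Fin d, monomial (j + 1) (k j)

lemma coeff_korobovPoly_succ (k : Fin d → ℤ) (j : Fin d) :
    (korobovPoly k).coeff (j + 1) = k j := by
  simp [korobovPoly, finsetSum_coeff, coeff_monomial, Fin.val_inj]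

lemma exists_of_mem_support_korobovPoly {n : ℕ} (hn : n ∈ (korobovPoly k).support) :
    ∃ j : Fin d, (j : ℕ) + 1 = n ∧ k j ≠ 0 := by
  rw [mem_support_iff, korobovPoly, finsetSum_coeff] at hn
  obtain ⟨j, -, hj⟩ := exists_ne_zero_of_sum_ne_zero hn
  rw [coeff_monomial] at hj
  exact ⟨j, (ite_ne_right_iff.mp hj).1, (ite_ne_right_iff.mp hj).2⟩

lemma natDegree_korobovPoly_le (k : Fin d → ℤ) : (korobovPoly k).natDegree ≤ d :=
  natDegree_sum_le_of_forall_le _ _ fun j _ => (natDegree_monomial_le _).trans j.isLt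

/-- The Fourier mode `x ↦ exp(2πi k·x)` on `ℝ^ι`. -/
def planeWave {ι : Type*} [Fintype ι] (k : ι → ℤ) (x : ι → ℝ) : ℂ :=
  e2pi (∑ j, (k j : ℂ) * (x j : ℂ))

/-- The exponential sum of frequency `k` over Korobov's `p`-set. -/
def korobovSum (p : ℕ) (k : Fin d → ℤ) : ℂ :=
  ∑ h ∈ range (p ^ 2), planeWave k (korobovPt d p h)

lemma sum_range_natCast_zmod {M : Type*} [AddCommMonoid M] (n : ℕ) [NeZero n] (f : ZMod n → M) :
    ∑ h ∈ range n, f h = ∑ x, f x :=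
  sum_nbij' (fun h => (h : ZMod n)) ZMod.val (fun _ _ => mem_univ _)
    (fun x _ => mem_range.mpr x.val_lt)
    (fun _ hh => ZMod.val_cast_of_lt (mem_range.mp hh)) (fun x _ => ZMod.natCast_zmod_val x)
    fun _ _ => rfl

lemma e2pi_sub_intCast (z : ℂ) (n : ℤ) : e2pi (z - n) = e2pi z := by
  rw [e2pi, e2pi, mul_sub, mul_comm _ (n : ℂ), Complex.exp_sub, Complex.exp_int_mul_two_pi_mul_I,
    div_one]

lemma planeWave_korobovPt {p : ℕ} [NeZero p] (k : Fin d → ℤ) (h : ℕ) :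
    planeWave k (korobovPt d p h) =
      ZMod.stdAddChar (aeval ((h : ℕ) : ZMod (p ^ 2)) (korobovPoly k)) := by
  have hval : aeval ((h : ℕ) : ZMod (p ^ 2)) (korobovPoly k) =
      ((∑ j, k j * (h : ℤ) ^ ((j : ℕ) + 1) : ℤ) : ZMod (p ^ 2)) := by
    simp [korobovPoly, map_sum, aeval_monomial]
  have hfract : ∑ j, (k j : ℂ) * ((korobovPt d p h j : ℝ) : ℂ) =
      ((∑ j, k j * (h : ℤ) ^ ((j : ℕ) + 1) : ℤ) : ℂ) / ((p ^ 2 : ℕ) : ℂ) -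
        ((∑ j : Fin d, k j * ⌊(h : ℝ) ^ ((j : ℕ) + 1) / (p : ℝ) ^ 2⌋ : ℤ) : ℂ) := by
    push_cast
    rw [sum_div, ← sum_sub_distrib]
    refine sum_congr rfl fun j _ => ?_
    rw [korobovPt, ← Int.self_sub_floor]
    push_cast
    ring
  rw [planeWave, hfract, e2pi_sub_intCast, hval, ZMod.stdAddChar_coe, e2pi, mul_div_assoc]

lemma korobovSum_eq {p : ℕ} [NeZero p] (k : Fin d → ℤ) :
    korobovSum p k = ∑ x : ZMod (p ^ 2), (ZMod.stdAddChar (aeval x (korobovPoly k)) : ℂ) := by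
  rw [korobovSum, ← sum_range_natCast_zmod]
  exact sum_congr rfl fun h _ => planeWave_korobovPt k h

lemma norm_korobovSum_le_sq {p : ℕ} (hp : p.Prime) (k : Fin d → ℤ) :
    ‖korobovSum p k‖ ≤ (p : ℝ) ^ 2 := by
  have : Fact p.Prime := ⟨hp⟩
  rw [korobovSum_eq]
  exact norm_sum_stdAddChar_aeval_le_sq _

lemma norm_korobovSum_le_mul_width {p : ℕ} (hp : p.Prime) {i : Fin d} (hi : ¬ p ∣ (i : ℕ) + 1)
    (hki : ¬ (p : ℤ) ∣ k i) : ‖korobovSum p k‖ ≤ p * width k := by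
  have : Fact p.Prime := ⟨hp⟩
  rw [korobovSum_eq]
  refine norm_sum_stdAddChar_aeval_le_mul_width ?_ hi (by rwa [coeff_korobovPoly_succ])
  intro a ha b hb
  obtain ⟨i, rfl, hi⟩ := exists_of_mem_support_korobovPoly ha
  obtain ⟨j, rfl, hj⟩ := exists_of_mem_support_korobovPoly hb
  have := lt_add_width hi hj
  omega

lemma log_mul_norm_korobovSum_le {p : ℕ} (hp : p.Prime) (hd : d ≤ p) {i : Fin d}
    (hip : (i : ℕ) + 1 = p) (hki : ¬ (p : ℤ) ∣ k i) (hk : ∀ j ≠ i, (p : ℤ) ∣ k j) {x : ℝ}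
    (hx : 1 ≤ x) (hxp : x ≤ 2 * p) :
    Real.log x * ‖korobovSum p k‖ ≤ 10 * p ^ 2 * width k := by
  have : Fact p.Prime := ⟨hp⟩
  have hi0 : k i ≠ 0 := fun h => hki (h ▸ dvd_zero _)
  have hpd : 1 ≤ d := by omega
  rw [korobovSum_eq]
  refine log_mul_norm_sum_stdAddChar_aeval_le ((natDegree_korobovPoly_le k).trans hd) ?_ ?_
    ((width_le hpd k).trans hd) ?_ hx hxp
  · rwa [← hip, coeff_korobovPoly_succ, hip]
  · intro n hnp
    by_cases hn : n ∈ (korobovPoly k).support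
    · obtain ⟨j, rfl, -⟩ := exists_of_mem_support_korobovPoly hn
      rw [coeff_korobovPoly_succ]
      exact hk j fun hji => hnp (hji ▸ hip)
    · rw [notMem_support_iff.mp hn]
      exact dvd_zero _
  · intro n hn
    obtain ⟨j, rfl, hj⟩ := exists_of_mem_support_korobovPoly hn
    have := lt_add_width hi0 hj
    omega

theorem norm_korobovSum_le {p : ℕ} (hp : p.Prime) (hd : d ≤ p) (k : Fin d → ℤ) {x : ℝ}
    (hx : 1 < x) (hxp : x ≤ 2 * p) :
    ‖korobovSum p k‖ ≤ p * width k + (if ∀ j, (p : ℤ) ∣ k j then (p : ℝ) ^ 2 else 0) +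
      (if p = d then 10 * (p : ℝ) ^ 2 * width k / Real.log x else 0) := by
  have hlog : 0 < Real.log x := Real.log_pos hx
  have hA : (0 : ℝ) ≤ p * width k := by positivity
  have hB : 0 ≤ if ∀ j, (p : ℤ) ∣ k j then (p : ℝ) ^ 2 else 0 := by split_ifs <;> positivity
  have hC : 0 ≤ if p = d then 10 * (p : ℝ) ^ 2 * width k / Real.log x else 0 := by
    split_ifs <;> positivity
  by_cases hall : ∀ j, (p : ℤ) ∣ k j
  · rw [if_pos hall]
    linarith [norm_korobovSum_le_sq hp k]
  by_cases hex : ∃ i : Fin d, (i : ℕ) + 1 ≠ p ∧ ¬ (p : ℤ) ∣ k i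
  · obtain ⟨i, hip, hki⟩ := hex
    have hi : ¬ p ∣ (i : ℕ) + 1 := Nat.not_dvd_of_pos_of_lt i.val.succ_pos (by omega)
    linarith [norm_korobovSum_le_mul_width hp hi hki]
  push Not at hall hex
  obtain ⟨i, hki⟩ := hall
  have hip : (i : ℕ) + 1 = p := by_contra fun h => hki (hex i h)
  have hothers : ∀ j ≠ i, (p : ℤ) ∣ k j := fun j hji =>
    hex j fun hjp => hji (Fin.ext (by omega))
  have hsum : ‖korobovSum p k‖ ≤ 10 * (p : ℝ) ^ 2 * width k / Real.log x := by
    rw [le_div_iff₀' hlog]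
    exact log_mul_norm_korobovSum_le hp hd hip hki hothers hx.le hxp
  rw [if_pos (by omega : p = d)]
  linarith

end Korobov

section PrimeAverages

lemma mem_Pset {m p : ℕ} : p ∈ Pset m ↔ p ≤ m ∧ p.Prime ∧ (m + 1) / 2 < p := by
  rw [Pset, mem_filter, mem_range, Nat.lt_succ_iff]

lemma le_two_mul_of_mem_Pset {m p : ℕ} (hp : p ∈ Pset m) : m ≤ 2 * p := by
  have := (mem_Pset.mp hp).2.2
  omega

lemma card_mul_sq_le_sum_sq {s : Finset ℕ} {a : ℝ} (ha : 0 ≤ a) (hs : ∀ p ∈ s, a ≤ p) :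
    #s * a ^ 2 ≤ ∑ p ∈ s, (p : ℝ) ^ 2 := by
  rw [← nsmul_eq_mul]
  exact card_nsmul_le_sum _ _ _ fun p hp => pow_le_pow_left₀ ha (hs p hp) 2

lemma sum_sq_le_card_mul_sq {s : Finset ℕ} {m : ℕ} (hs : ∀ p ∈ s, p ≤ m) :
    ∑ p ∈ s, (p : ℝ) ^ 2 ≤ #s * (m : ℝ) ^ 2 := by
  rw [← nsmul_eq_mul]
  exact sum_le_card_nsmul _ _ _ fun p hp =>
    pow_le_pow_left₀ p.cast_nonneg (Nat.cast_le.mpr (hs p hp)) 2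

lemma natCast_mul_sum_Pset_le (m : ℕ) :
    (m : ℝ) * ∑ p ∈ Pset m, (p : ℝ) ≤ 2 * ∑ p ∈ Pset m, (p : ℝ) ^ 2 := by
  rw [mul_sum, mul_sum]
  refine sum_le_sum fun p hp => ?_
  have hmp : (m : ℝ) ≤ 2 * p := mod_cast le_two_mul_of_mem_Pset hp
  calc (m : ℝ) * p ≤ 2 * p * p := by gcongr
    _ = 2 * (p : ℝ) ^ 2 := by ring

lemma card_Pset_dvd_mul_log_le {m : ℕ} (hm : 0 < m) {n : ℤ} (hn : n ≠ 0) {s : Finset ℕ}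
    (hs : s ⊆ Pset m) (hsn : ∀ p ∈ s, (p : ℤ) ∣ n) :
    #s * Real.log (m / 2) ≤ Real.log |(n : ℝ)| := by
  have hdvd : ∏ p ∈ s, p ∣ n.natAbs :=
    prod_primes_dvd _ (fun p hp => (mem_Pset.mp (hs hp)).2.1.prime)
      fun p hp => Int.natCast_dvd.mp (hsn p hp)
  have hpow : ((m : ℝ) / 2) ^ #s ≤ |(n : ℝ)| := by
    calc ((m : ℝ) / 2) ^ #s = ∏ _p ∈ s, (m : ℝ) / 2 := by rw [prod_const]
      _ ≤ ∏ p ∈ s, (p : ℝ) := prod_le_prod (fun _ _ => by positivity) fun p hp => by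
        have : (m : ℝ) ≤ 2 * p := mod_cast le_two_mul_of_mem_Pset (hs hp)
        linarith
      _ = ((∏ p ∈ s, p : ℕ) : ℝ) := (Nat.cast_prod _ _).symm
      _ ≤ (n.natAbs : ℝ) := Nat.cast_le.mpr (Nat.le_of_dvd (Int.natAbs_pos.mpr hn) hdvd)
      _ = |(n : ℝ)| := by rw [Nat.cast_natAbs, Int.cast_abs]
  rw [← Real.log_pow]
  exact Real.log_le_log (by positivity) hpow

variable {d : ℕ} {k : Fin d → ℤ} {m : ℕ}

/-- The primes of `ℙ_m` dividing every coordinate of `k`. -/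
def commonPrimes (m : ℕ) (k : Fin d → ℤ) : Finset ℕ :=
  (Pset m).filter fun p : ℕ => ∀ j, (p : ℤ) ∣ k j

lemma card_commonPrimes_mul_log_le (hm : 0 < m) (hk : k ≠ 0) :
    #(commonPrimes m k) * Real.log (m / 2) ≤ logmin k := by
  have hne := supp_nonempty_iff.mpr hk
  rw [logmin, dif_pos hne]
  exact le_inf' hne _ fun j hj => card_Pset_dvd_mul_log_le hm (mem_supp.mp hj) (filter_subset _ _)
    fun p hp => (mem_filter.mp hp).2 j

lemma log_le_mul_log_half {x : ℝ} (hx : 32 ≤ x) : Real.log x ≤ 5 / 4 * Real.log (x / 2) := by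
  have hsplit : Real.log x = Real.log (x / 2) + Real.log 2 := by
    rw [← Real.log_mul (by positivity) two_ne_zero, div_mul_cancel₀ _ two_ne_zero]
  have hfour : 4 * Real.log 2 ≤ Real.log (x / 2) := by
    calc 4 * Real.log 2 = Real.log (2 ^ 4) := by rw [Real.log_pow]; norm_num
      _ ≤ Real.log (x / 2) := Real.log_le_log (by norm_num) (by linarith)
  linarith

lemma card_Pset_mul_log_mul_sum_commonPrimes_sq_le (hm : 32 ≤ m) (hk : k ≠ 0) :
    #(Pset m) * Real.log m * ∑ p ∈ commonPrimes m k, (p : ℝ) ^ 2 ≤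
      5 * (∑ p ∈ Pset m, (p : ℝ) ^ 2) * logmin k := by
  set D := commonPrimes m k
  set N := ∑ p ∈ Pset m, (p : ℝ) ^ 2
  have hm' : (32 : ℝ) ≤ m := mod_cast hm
  have hD : ∑ p ∈ D, (p : ℝ) ^ 2 ≤ #D * (m : ℝ) ^ 2 :=
    sum_sq_le_card_mul_sq fun p hp => (mem_Pset.mp (mem_filter.mp hp).1).1
  have hN : #(Pset m) * (m : ℝ) ^ 2 ≤ 4 * N := by
    have := card_mul_sq_le_sum_sq (s := Pset m) (a := m / 2) (by positivity) fun p hp => by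
      have : (m : ℝ) ≤ 2 * p := mod_cast le_two_mul_of_mem_Pset hp
      linarith
    linarith
  have hlog : Real.log m ≤ 5 / 4 * Real.log (m / 2) := log_le_mul_log_half hm'
  have hlog0 : 0 ≤ Real.log m := Real.log_nonneg (by linarith)
  calc #(Pset m) * Real.log m * ∑ p ∈ D, (p : ℝ) ^ 2
      ≤ #(Pset m) * Real.log m * (#D * (m : ℝ) ^ 2) := by gcongr
    _ = #(Pset m) * (m : ℝ) ^ 2 * (#D * Real.log m) := by ring
    _ ≤ 4 * N * (#D * (5 / 4 * Real.log (m / 2))) := by gcongr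
    _ = 5 * N * (#D * Real.log (m / 2)) := by ring
    _ ≤ 5 * N * logmin k := by
      gcongr
      exact card_commonPrimes_mul_log_le (by omega) hk

lemma one_le_weight2 (k : Fin d → ℤ) : 1 ≤ weight2 k :=
  (Nat.one_le_cast.mpr (one_le_width k)).trans (le_max_left _ _)

theorem mul_sum_norm_korobovSum_le {T : ℝ} (hT0 : 0 ≤ T) (hTm : 2 * T ≤ m)
    (hT : T ≤ #(Pset m) * Real.log m) (hm : 32 ≤ m) (hd : ∀ p ∈ Pset m, d ≤ p) (hk : k ≠ 0) :
    T * ∑ p ∈ Pset m, ‖korobovSum p k‖ ≤ 16 * (∑ p ∈ Pset m, (p : ℝ) ^ 2) * weight2 k := by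
  set N := ∑ p ∈ Pset m, (p : ℝ) ^ 2
  set w := (width k : ℝ)
  have hlog : 0 < Real.log m := Real.log_pos (by exact_mod_cast (by omega : 1 < m))
  have hpointwise : ∑ p ∈ Pset m, ‖korobovSum p k‖ ≤ ∑ p ∈ Pset m, (p : ℝ) * w +
      ∑ p ∈ commonPrimes m k, (p : ℝ) ^ 2 +
      ∑ p ∈ Pset m, if p = d then 10 * (p : ℝ) ^ 2 * w / Real.log m else 0 := by
    rw [commonPrimes, sum_filter, ← sum_add_distrib, ← sum_add_distrib]
    exact sum_le_sum fun p hp => norm_korobovSum_le (mem_Pset.mp hp).2.1 (hd p hp) k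
      (mod_cast (by omega : 1 < m)) (mod_cast le_two_mul_of_mem_Pset hp)
  have hgeneric : T * ∑ p ∈ Pset m, (p : ℝ) * w ≤ N * w := by
    have hsum := natCast_mul_sum_Pset_le m
    have hTsum : 2 * T * ∑ p ∈ Pset m, (p : ℝ) ≤ m * ∑ p ∈ Pset m, (p : ℝ) := by gcongr
    rw [← sum_mul, ← mul_assoc]
    exact mul_le_mul_of_nonneg_right (by linarith) (Nat.cast_nonneg _)
  have hdvd : T * ∑ p ∈ commonPrimes m k, (p : ℝ) ^ 2 ≤ 5 * N * logmin k :=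
    (mul_le_mul_of_nonneg_right hT (by positivity)).trans
      (card_Pset_mul_log_mul_sum_commonPrimes_sq_le hm hk)
  have hexceptional : T * (∑ p ∈ Pset m, if p = d then 10 * (p : ℝ) ^ 2 * w / Real.log m else 0) ≤
      10 * N * w := by
    rw [sum_ite_eq' (Pset m) d]
    split_ifs
    · calc T * (10 * (d : ℝ) ^ 2 * w / Real.log m)
          ≤ #(Pset m) * Real.log m * (10 * (d : ℝ) ^ 2 * w / Real.log m) := by gcongr
        _ = 10 * (#(Pset m) * (d : ℝ) ^ 2) * w := by field_simp
        _ ≤ 10 * N * w := by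
          gcongr
          exact card_mul_sq_le_sum_sq d.cast_nonneg fun p hp => Nat.cast_le.mpr (hd p hp)
    · rw [mul_zero]
      positivity
  calc T * ∑ p ∈ Pset m, ‖korobovSum p k‖ ≤ N * w + 5 * N * logmin k + 10 * N * w := by
        linarith [mul_le_mul_of_nonneg_left hpointwise hT0]
    _ ≤ N * weight2 k + 5 * N * weight2 k + 10 * N * weight2 k := by
      gcongr
      exacts [le_max_left _ _, le_max_right _ _, le_max_left _ _]
    _ = 16 * N * weight2 k := by ring

end PrimeAverages

/-! ### Equal-weight quadrature of Fourier series -/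

section Quadrature

open MeasureTheory

variable {ι : Type*} [Fintype ι]

lemma norm_planeWave (k : ι → ℤ) (x : ι → ℝ) : ‖planeWave k x‖ = 1 := by
  have harg : 2 * (Real.pi : ℂ) * Complex.I * ∑ j, (k j : ℂ) * (x j : ℂ) =
      ((2 * Real.pi * ∑ j, (k j : ℝ) * x j : ℝ) : ℂ) * Complex.I := by
    push_cast
    ring
  rw [planeWave, e2pi, harg, Complex.norm_exp_ofReal_mul_I]

lemma continuous_planeWave (k : ι → ℤ) : Continuous (planeWave k) := by
  unfold planeWave e2pi
  fun_prop

lemma planeWave_zero (x : ι → ℝ) : planeWave 0 x = 1 := by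
  simp [planeWave, e2pi]

lemma planeWave_eq_prod (k : ι → ℤ) (x : ι → ℝ) :
    planeWave k x = ∏ j, e2pi ((k j : ℂ) * (x j : ℂ)) := by
  simp only [planeWave, e2pi, mul_sum, Complex.exp_sum]

lemma setIntegral_e2pi_intCast_mul (n : ℤ) :
    ∫ x in Set.Ico (0 : ℝ) 1, e2pi ((n : ℂ) * (x : ℂ)) = if n = 0 then 1 else 0 := by
  rw [integral_Ico_eq_integral_Ioc, ← intervalIntegral.integral_of_le zero_le_one]
  split_ifs with hn
  · simp [hn, e2pi]
  · have hn' : 2 * (Real.pi : ℂ) * Complex.I * n ≠ 0 :=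
      mul_ne_zero Complex.two_pi_I_ne_zero (Int.cast_ne_zero.mpr hn)
    simp only [e2pi, ← mul_assoc]
    rw [integral_exp_mul_complex hn', Complex.ofReal_one, mul_one, mul_comm _ (n : ℂ),
      Complex.exp_int_mul_two_pi_mul_I, Complex.ofReal_zero, mul_zero, Complex.exp_zero, sub_self,
      zero_div]

lemma setIntegral_planeWave (k : ι → ℤ) :
    ∫ x in Set.univ.pi fun _ : ι => Set.Ico (0 : ℝ) 1, planeWave k x = if k = 0 then 1 else 0 := by
  simp only [volume_pi, Measure.restrict_pi_pi, planeWave_eq_prod]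
  rw [integral_fintype_prod_eq_prod fun j (y : ℝ) => e2pi ((k j : ℂ) * (y : ℂ))]
  simp only [setIntegral_e2pi_intCast_mul, prod_ite_zero, prod_const_one, mem_univ, true_imp_iff,
    funext_iff, Pi.zero_apply]

variable {f : (ι → ℝ) → ℂ} {c : (ι → ℤ) → ℂ}

lemma hasSum_integral_of_hasSum_planeWave (μ : Measure (ι → ℝ)) [IsProbabilityMeasure μ]
    (hc : Summable fun k => ‖c k‖) (hf : ∀ x, HasSum (fun k => c k * planeWave k x) (f x)) :
    HasSum (fun k => c k * ∫ x, planeWave k x ∂μ) (∫ x, f x ∂μ) := by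
  have hsum := hasSum_integral_of_summable_integral_norm (μ := μ)
    (F := fun k x => c k * planeWave k x)
    (fun k => (Integrable.of_bound (continuous_planeWave k).aestronglyMeasurable 1
      (.of_forall fun x => (norm_planeWave k x).le)).const_mul _)
    (by simpa only [norm_mul, norm_planeWave, mul_one, integral_const, probReal_univ, one_smul]
      using hc)
  simpa only [(hf _).tsum_eq, integral_const_mul] using hsum

lemma setIntegral_eq_of_hasSum_planeWave (hc : Summable fun k => ‖c k‖)
    (hf : ∀ x, HasSum (fun k => c k * planeWave k x) (f x)) :
    ∫ x in Set.univ.pi fun _ : ι => Set.Ico (0 : ℝ) 1, f x = c 0 := by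
  set μ := (volume : Measure (ι → ℝ)).restrict (Set.univ.pi fun _ => Set.Ico (0 : ℝ) 1) with hμ
  have : IsProbabilityMeasure μ :=
    ⟨by rw [Measure.restrict_apply_univ, Real.volume_pi_Ico]; simp⟩
  have hint := hasSum_integral_of_hasSum_planeWave μ hc hf
  simp only [hμ, setIntegral_planeWave] at hint
  rw [hint.unique (hasSum_single 0 fun k hk => by rw [if_neg hk, mul_zero]), if_pos rfl, mul_one]

/-- The equal-weight quadrature rule averaging over the nodes `y i`, `i ∈ s`. -/
def nodeAverage {X α : Type*} (s : Finset α) (y : α → X) (f : X → ℂ) : ℂ :=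
  1 / #s * ∑ i ∈ s, f (y i)

theorem norm_setIntegral_sub_nodeAverage_le {α : Type*} {s : Finset α} (hs : s.Nonempty)
    {y : α → ι → ℝ} {W : (ι → ℤ) → ℝ} (hW : ∀ k, 1 ≤ W k) {ε : ℝ} (hε : 0 ≤ ε)
    (hy : ∀ k ≠ 0, ‖nodeAverage s y (planeWave k)‖ ≤ ε * W k)
    (hc : Summable fun k => ‖c k‖ * W k)
    (hf : ∀ x, f x = ∑' k, c k * planeWave k x) :
    ‖(∫ x in Set.univ.pi fun _ : ι => Set.Ico (0 : ℝ) 1, f x) - nodeAverage s y f‖ ≤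
      ε * ∑' k, ‖c k‖ * W k := by
  have hc' : Summable fun k => ‖c k‖ := hc.of_nonneg_of_le (fun _ => norm_nonneg _)
    fun k => le_mul_of_one_le_right (norm_nonneg _) (hW k)
  have hsum : ∀ x, HasSum (fun k => c k * planeWave k x) (f x) := fun x => by
    rw [hf x]
    refine (Summable.of_norm ?_).hasSum
    simpa only [norm_mul, norm_planeWave, mul_one] using hc'
  have haverage : HasSum (fun k => c k * nodeAverage s y (planeWave k)) (nodeAverage s y f) := by
    have := (hasSum_sum fun i (_ : i ∈ s) => hsum (y i)).mul_left (1 / (#s : ℂ))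
    simpa only [nodeAverage, mul_left_comm, mul_sum] using this
  have hdiff := (hasSum_ite_eq 0 (c 0)).sub haverage
  rw [setIntegral_eq_of_hasSum_planeWave hc' hsum]
  refine hdiff.norm_le_of_bounded (hc.hasSum.mul_left ε) fun k => ?_
  split_ifs with hk
  · have hs0 : (#s : ℂ) ≠ 0 := Nat.cast_ne_zero.mpr hs.card_ne_zero
    have : 0 ≤ W k := zero_le_one.trans (hW k)
    simp only [hk, nodeAverage, planeWave_zero, sum_const, nsmul_eq_mul, mul_one,
      one_div_mul_cancel hs0, sub_self, norm_zero]
    subst hk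
    positivity
  · rw [zero_sub, norm_neg, norm_mul, mul_left_comm]
    gcongr
    exact hy k hk

end Quadrature

/-! ### The union of Korobov sets -/

section KorobovUnion

open MeasureTheory

variable {d m : ℕ}

/-- The index set of the multiset union of the Korobov `p`-sets with `p ∈ P`: the pair `⟨p, h⟩`
stands for the node `korobovPt d p h`. -/
def korobovIndex (P : Finset ℕ) : Finset (Σ _ : ℕ, ℕ) :=
  P.sigma fun p => range (p ^ 2)

lemma card_korobovIndex (P : Finset ℕ) : #(korobovIndex P) = ∑ p ∈ P, p ^ 2 := by
  simp only [korobovIndex, card_sigma, card_range]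

lemma nodeAverage_korobovIndex (P : Finset ℕ) (f : (Fin d → ℝ) → ℂ) :
    nodeAverage (korobovIndex P) (fun i => korobovPt d i.1 i.2) f =
      1 / ((∑ p ∈ P, p ^ 2 : ℕ) : ℂ) * ∑ p ∈ P, ∑ h ∈ range (p ^ 2), f (korobovPt d p h) := by
  rw [nodeAverage, card_korobovIndex, korobovIndex, sum_sigma]

lemma norm_nodeAverage_planeWave_le {T : ℝ} (hT0 : 0 < T) (hTm : 2 * T ≤ m)
    (hT : T ≤ #(Pset m) * Real.log m) (hm : 32 ≤ m) (hd : ∀ p ∈ Pset m, d ≤ p) {k : Fin d → ℤ}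
    (hk : k ≠ 0) :
    ‖nodeAverage (korobovIndex (Pset m)) (fun i => korobovPt d i.1 i.2) (planeWave k)‖ ≤
      16 / T * weight2 k := by
  have hsum := mul_sum_norm_korobovSum_le hT0.le hTm hT hm hd hk
  have hweight : 0 ≤ weight2 k := zero_le_one.trans (one_le_weight2 k)
  rw [nodeAverage_korobovIndex, norm_mul, norm_div, norm_one, Complex.norm_natCast]
  push_cast
  set N := ∑ p ∈ Pset m, (p : ℝ) ^ 2
  have : 0 ≤ N := by positivity
  calc 1 / N * ‖∑ p ∈ Pset m, korobovSum p k‖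
      ≤ 1 / N * (16 * N * weight2 k / T) := by
        gcongr
        rw [le_div_iff₀' hT0]
        exact (mul_le_mul_of_nonneg_left (norm_sum_le _ _) hT0.le).trans hsum
    _ = N / N * (16 / T * weight2 k) := by ring
    _ ≤ 16 / T * weight2 k := mul_le_of_le_one_left (by positivity) (div_self_le_one N)

theorem norm_setIntegral_sub_korobov_le {T : ℝ} (hT0 : 0 < T) (hTm : 2 * T ≤ m)
    (hT : T ≤ #(Pset m) * Real.log m) (hm : 32 ≤ m) (hd : ∀ p ∈ Pset m, d ≤ p)
    {f : (Fin d → ℝ) → ℂ} {c : (Fin d → ℤ) → ℂ} (hc : Summable fun k => ‖c k‖ * weight2 k)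
    (hf : ∀ x, f x = ∑' k, c k * planeWave k x) :
    ‖(∫ x in Set.univ.pi fun _ : Fin d => Set.Ico (0 : ℝ) 1, f x) -
        1 / ((∑ p ∈ Pset m, p ^ 2 : ℕ) : ℂ) *
          ∑ p ∈ Pset m, ∑ h ∈ range (p ^ 2), f (korobovPt d p h)‖ ≤
      16 / T * ∑' k, ‖c k‖ * weight2 k := by
  obtain ⟨p, hp⟩ : (Pset m).Nonempty := by
    rw [nonempty_iff_ne_empty]
    intro hempty
    rw [hempty, card_empty, Nat.cast_zero, zero_mul] at hT
    exact hT0.not_ge hT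
  have hnodes : (korobovIndex (Pset m)).Nonempty :=
    ⟨⟨p, 0⟩, mem_sigma.mpr ⟨hp, mem_range.mpr (pow_pos (mem_Pset.mp hp).2.1.pos 2)⟩⟩
  rw [← nodeAverage_korobovIndex]
  exact norm_setIntegral_sub_nodeAverage_le hnodes one_le_weight2 (by positivity)
    (fun k hk => norm_nodeAverage_planeWave_le hT0 hTm hT hm hd hk) hc hf

end KorobovUnion

lemma le_half_of_le_card_Pset_two {c : ℝ} (hc : c * (2 : ℕ) / Real.log (2 : ℕ) ≤ #(Pset 2)) :
    c ≤ 1 / 2 := by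
  have hsub : Pset 2 ⊆ {2} := fun p hp => by
    have := (mem_Pset.mp hp).2.1.two_le
    exact mem_singleton.mpr (le_antisymm (mem_Pset.mp hp).1 this)
  have hcard : (#(Pset 2) : ℝ) ≤ 1 := mod_cast card_le_card hsub
  have hlog : 0 < Real.log 2 := Real.log_pos one_lt_two
  have hc2 := hc.trans hcard
  rw [Nat.cast_two, div_le_iff₀ hlog] at hc2
  linarith [Real.log_two_lt_d9]

lemma natCast_ceil_div_le {a δ : ℝ} (ha : 0 ≤ a) (hδ0 : 0 < δ) (hδ1 : δ ≤ 1) :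
    (⌈a / δ⌉₊ : ℝ) ≤ (a + 1) / δ := by
  have hone : 1 ≤ 1 / δ := (one_le_div hδ0).mpr hδ1
  rw [add_div]
  linarith [Nat.ceil_lt_add_one (div_nonneg ha hδ0.le)]

lemma sum_sq_Pset_le {m : ℕ} {C x y : ℝ} (hC : 0 ≤ C) (hcard : #(Pset m) ≤ C * m / Real.log m)
    (hx : 1 < x) (hxm : x ≤ m) (hmy : m ≤ y) :
    ((∑ p ∈ Pset m, p ^ 2 : ℕ) : ℝ) ≤ C * y ^ 3 / Real.log x := by
  have hy : 0 ≤ y := by linarith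
  have hlogx : 0 < Real.log x := Real.log_pos hx
  have hlog : Real.log x ≤ Real.log m := Real.log_le_log (by linarith) hxm
  calc ((∑ p ∈ Pset m, p ^ 2 : ℕ) : ℝ) ≤ #(Pset m) * (m : ℝ) ^ 2 := by
        push_cast
        exact sum_sq_le_card_mul_sq fun p hp => (mem_Pset.mp hp).1
    _ ≤ C * m / Real.log m * (m : ℝ) ^ 2 := by gcongr
    _ = C * (m : ℝ) ^ 3 / Real.log m := by ring
    _ ≤ C * y ^ 3 / Real.log x := by gcongr

open MeasureTheory in
theorem strong_polynomial_tractability_Fd2 (cP CP : ℝ) (hc0 : 0 < cP)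
    (hcC : cP < min 1 CP)
    (hcard : ∀ m : ℕ, 2 ≤ m →
      cP * m / Real.log m ≤ ((Pset m).card : ℝ) ∧
      ((Pset m).card : ℝ) ≤ CP * m / Real.log m) :
    ∃ C₂ : ℝ, 0 < C₂ ∧ ∀ d : ℕ, 1 ≤ d → ∀ ε : ℝ, 0 < ε → ε < 1 →
      (∀ p ∈ Pset ⌈16 / (cP * ε)⌉₊, d ≤ p) →
      (∀ (f : (Fin d → ℝ) → ℝ) (fhat : (Fin d → ℤ) → ℂ),
        Continuous f →
        Summable (fun k : Fin d → ℤ => ‖fhat k‖ * weight2 k) →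
        (∀ x : Fin d → ℝ,
          (f x : ℂ) = ∑' k : Fin d → ℤ, fhat k * e2pi (∑ j, (k j : ℂ) * (x j : ℂ))) →
        (∑' k : Fin d → ℤ, ‖fhat k‖ * weight2 k) ≤ 1 →
        ‖(∫ x in Set.univ.pi fun _ : Fin d => Set.Ico (0 : ℝ) 1, (f x : ℂ)) -
            (1 / ((∑ p ∈ Pset ⌈16 / (cP * ε)⌉₊, p ^ 2 : ℕ) : ℂ)) *
              ∑ p ∈ Pset ⌈16 / (cP * ε)⌉₊, ∑ h ∈ Finset.range (p ^ 2),
                (f (korobovPt d p h) : ℂ)‖ ≤ ε) ∧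
      ((∑ p ∈ Pset ⌈16 / (cP * ε)⌉₊, p ^ 2 : ℕ) : ℝ) ≤ C₂ * ε⁻¹ ^ 3 / Real.log ε⁻¹ := by
  have hCP : 0 < CP := hc0.trans (hcC.trans_le (min_le_right _ _))
  have hhalf : cP ≤ 1 / 2 := le_half_of_le_card_Pset_two (hcard 2 le_rfl).1
  refine ⟨CP * (17 / cP) ^ 3, by positivity, fun d _ ε hε0 hε1 hd => ?_⟩
  have hδ0 : 0 < cP * ε := mul_pos hc0 hε0
  have hδ : cP * ε ≤ 1 / 2 := by nlinarith
  have hlower : 16 / (cP * ε) ≤ (⌈16 / (cP * ε)⌉₊ : ℝ) := Nat.le_ceil _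
  have hupper : (⌈16 / (cP * ε)⌉₊ : ℝ) ≤ 17 / (cP * ε) :=
    (natCast_ceil_div_le (by norm_num) hδ0 (by linarith)).trans_eq (by norm_num)
  set m := ⌈16 / (cP * ε)⌉₊
  have hm_mul : 16 ≤ m * (cP * ε) := (div_le_iff₀ hδ0).mp hlower
  have hm : (32 : ℝ) ≤ m := by nlinarith
  have hlog : 0 < Real.log m := Real.log_pos (by linarith)
  obtain ⟨hcard_lower, hcard_upper⟩ := hcard m (by exact_mod_cast (by linarith : (2 : ℝ) ≤ m))
  constructor
  · intro f fhat _ hsummable hf hnorm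
    have herror := norm_setIntegral_sub_korobov_le (T := cP * m) (by positivity) (by nlinarith)
      ((div_le_iff₀ hlog).mp hcard_lower) (by exact_mod_cast hm) hd hsummable hf
    refine (herror.trans (mul_le_of_le_one_right (by positivity) hnorm)).trans ?_
    rw [div_le_iff₀ (by positivity)]
    linarith
  · have hεm : ε⁻¹ ≤ m := by
      rw [inv_le_iff_one_le_mul₀ hε0]
      nlinarith
    exact (sum_sq_Pset_le hCP.le hcard_upper ((one_lt_inv₀ hε0).mpr hε1) hεm hupper).trans_eq
      (by ring)
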